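/- Let r > 13/8. There is θ₀ > 0 such that for every θ ∈ (0,θ₀) there exists a constant C = C(r,θ) with the following property: for all ε, μ ∈ (0,1], all T > 0, and every solution η of the Whitham equation ∂_t η + √T_μ(D) ∂_x η + (ε/2) ∂_x(η²) = 0 on [0,T], with t ↦ η(·,t) a C¹ curve in the Schwartz space 𝓢(ℝ), one has (∫_0^T ‖∂_x η(t)‖_{L^∞(ℝ)}^2 dt)^{1/2} ≤ C [ μ^{−1/5+2θ/5} T^{3/10+2θ/5} sup_{t∈[0,T]} ‖η(t)‖_{H^r} + ε μ^{−2/5+θ/5} T^{11/10+θ/5} ( sup_{t∈[0,T]} ‖η(t)‖_{H^r} )² ]. -/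

import Mathlib

noncomputable section

open MeasureTheory SchwartzMap
open scoped FourierTransform ENNReal

/-- The Japanese bracket `⟨x⟩ = (1 + x²)^{1/2}`. -/
def jap (x : ℝ) : ℝ := (1 + x ^ 2) ^ ((1 : ℝ) / 2)

/-- The symbol `T_μ(ξ) = tanh(√μ |ξ|)/(√μ |ξ|)` for `ξ ≠ 0`, with value `1` at `ξ = 0`. -/
def Tsymb (μ ξ : ℝ) : ℝ :=
  if ξ = 0 then 1 else Real.tanh (Real.sqrt μ * |ξ|) / (Real.sqrt μ * |ξ|)

/-- Complexification of a real-valued function. -/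
def cc (f : ℝ → ℝ) : ℝ → ℂ := fun x => (f x : ℂ)

/-- The multiplier `√T_μ(D)`, `(√T_μ(D) g)^(ξ) = T_μ(ξ)^{1/2} ĝ(ξ)`. -/
def sqrtTmul (μ : ℝ) (g : ℝ → ℂ) : ℝ → ℂ :=
  𝓕⁻ (fun ξ : ℝ => ((Real.sqrt (Tsymb μ ξ) : ℝ) : ℂ) * 𝓕 g ξ)

/-- The `H^r`-norm `‖f‖_{H^r} = ‖⟨ξ⟩^r f̂‖_{L²}` (as an extended nonnegative real). -/
def HsNorm (r : ℝ) (f : ℝ → ℂ) : ℝ≥0∞ :=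
  eLpNorm (fun ξ : ℝ => jap ξ ^ r * ‖𝓕 f ξ‖) 2 volume

namespace Whit
open Complex in
lemma vdc1 (φ φ' φ'' : ℝ → ℝ) {a b δ : ℝ} (hab : a ≤ b) (hδ : 0 < δ)
    (h1 : ∀ x ∈ Set.Icc a b, HasDerivAt φ (φ' x) x)
    (h2 : ∀ x ∈ Set.Icc a b, HasDerivAt φ' (φ'' x) x)
    (hc : ContinuousOn φ'' (Set.Icc a b))
    (hpos : ∀ x ∈ Set.Icc a b, 0 ≤ φ'' x) (hd : ∀ x ∈ Set.Icc a b, δ ≤ φ' x) :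
    ‖∫ x in a..b, Complex.exp ((φ x : ℂ) * I)‖ ≤ 3 / δ := by
  have hu : Set.uIcc a b = Set.Icc a b := Set.uIcc_of_le hab
  have c1 : ContinuousOn φ' (Set.Icc a b) := fun x hx => (h2 x hx).continuousAt.continuousWithinAt
  have c0 : ContinuousOn φ (Set.Icc a b) := fun x hx => (h1 x hx).continuousAt.continuousWithinAt
  have ne : ∀ x ∈ Set.Icc a b, φ' x ≠ 0 := fun x hx => (lt_of_lt_of_le hδ (hd x hx)).ne'
  have neC : ∀ x ∈ Set.Icc a b, (φ' x : ℂ) ≠ 0 := fun x hx => by exact_mod_cast ne x hx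
  have hw : ∀ x ∈ Set.Icc a b, HasDerivAt (fun x => Complex.exp ((φ x : ℂ) * I) * ((φ' x)⁻¹ : ℝ))
      (Complex.exp ((φ x : ℂ) * I) * I +
        Complex.exp ((φ x : ℂ) * I) * ((-(φ'' x) / (φ' x)^2 : ℝ) : ℂ)) x := by
    intro x hx
    have e1 : HasDerivAt (fun x => Complex.exp ((φ x : ℂ) * I))
        (Complex.exp ((φ x : ℂ) * I) * ((φ' x : ℂ) * I)) x :=
      ((h1 x hx).ofReal_comp.mul_const I).cexp
    have e2 : HasDerivAt (fun x => (((φ' x)⁻¹ : ℝ) : ℂ)) ((-(φ'' x) / (φ' x)^2 : ℝ) : ℂ) x :=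
      ((h2 x hx).inv (ne x hx)).ofReal_comp
    refine (e1.mul e2).congr_deriv ?_
    have := neC x hx
    push_cast
    field_simp
  have ce : ContinuousOn (fun x => Complex.exp ((φ x : ℂ) * I)) (Set.Icc a b) := by
    fun_prop
  have cr : ContinuousOn (fun x => -(φ'' x) / (φ' x)^2) (Set.Icc a b) :=
    hc.neg.div (c1.pow 2) (fun x hx => pow_ne_zero 2 (ne x hx))
  have i1 : IntervalIntegrable (fun x => Complex.exp ((φ x : ℂ) * I) * I) volume a b :=
    ContinuousOn.intervalIntegrable (by rw [hu]; fun_prop)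
  have i2 : IntervalIntegrable (fun x => Complex.exp ((φ x : ℂ) * I) * ((-(φ'' x) / (φ' x)^2 : ℝ) : ℂ)) volume a b :=
    ContinuousOn.intervalIntegrable (by
      rw [hu]; exact ce.mul (Complex.continuous_ofReal.comp_continuousOn cr))
  have ir : IntervalIntegrable (fun x => -(φ'' x) / (φ' x)^2) volume a b :=
    ContinuousOn.intervalIntegrable (by rw [hu]; exact cr)
  have ftc := intervalIntegral.integral_eq_sub_of_hasDerivAt (a := a) (b := b)
    (fun x hx => hw x (hu ▸ hx)) (i1.add i2)
  rw [intervalIntegral.integral_add i1 i2, intervalIntegral.integral_mul_const] at ftc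
  have ftr := intervalIntegral.integral_eq_sub_of_hasDerivAt (a := a) (b := b)
    (fun x hx => (h2 x (hu ▸ hx)).inv (ne x (hu ▸ hx))) ir
  have b2 : ‖∫ x in a..b, Complex.exp ((φ x : ℂ) * I) * ((-(φ'' x) / (φ' x)^2 : ℝ) : ℂ)‖
      ≤ (φ' a)⁻¹ - (φ' b)⁻¹ := by
    have : ((φ' a)⁻¹ - (φ' b)⁻¹) = ∫ x in a..b, -(-(φ'' x) / (φ' x)^2) := by
      rw [intervalIntegral.integral_neg, ftr]; simp
    rw [this]
    refine intervalIntegral.norm_integral_le_of_norm_le hab ?_ ir.neg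
    refine Filter.Eventually.of_forall fun x hx => ?_
    have hx' : x ∈ Set.Icc a b := ⟨hx.1.le, hx.2⟩
    rw [norm_mul, Complex.norm_exp_ofReal_mul_I, one_mul, Complex.norm_real, Real.norm_eq_abs,
      abs_of_nonpos]
    have := hpos x hx'
    rw [neg_div]
    have : 0 ≤ φ'' x / φ' x ^ 2 := by positivity
    linarith
  have ha := hd a ⟨le_rfl, hab⟩
  have hb := hd b ⟨hab, le_rfl⟩
  have ka : (φ' a)⁻¹ ≤ δ⁻¹ := by gcongr
  have kb : (φ' b)⁻¹ ≤ δ⁻¹ := by gcongr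
  have kb0 : 0 ≤ (φ' b)⁻¹ := by have := hδ.trans_le hb; positivity
  have ka0 : 0 ≤ (φ' a)⁻¹ := by have := hδ.trans_le ha; positivity
  have key : ‖(∫ x in a..b, Complex.exp ((φ x : ℂ) * I)) * I‖ ≤ 3 / δ := by
    rw [eq_sub_of_add_eq ftc]
    refine (norm_sub_le _ _).trans ?_
    refine (add_le_add_left (norm_sub_le _ _) _).trans ?_
    rw [norm_mul, norm_mul, Complex.norm_exp_ofReal_mul_I, Complex.norm_exp_ofReal_mul_I,
      Complex.norm_real, Complex.norm_real, Real.norm_of_nonneg ka0, Real.norm_of_nonneg kb0]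
    rw [div_eq_mul_inv]
    linarith
  simpa using key

open Complex in
lemma vdc1' (φ φ' φ'' : ℝ → ℝ) {a b δ : ℝ} (hab : a ≤ b) (hδ : 0 < δ)
    (h1 : ∀ x ∈ Set.Icc a b, HasDerivAt φ (φ' x) x)
    (h2 : ∀ x ∈ Set.Icc a b, HasDerivAt φ' (φ'' x) x)
    (hc : ContinuousOn φ'' (Set.Icc a b))
    (hpos : ∀ x ∈ Set.Icc a b, 0 ≤ φ'' x) (hd : ∀ x ∈ Set.Icc a b, φ' x ≤ -δ) :
    ‖∫ x in a..b, Complex.exp ((φ x : ℂ) * I)‖ ≤ 3 / δ := by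
  have hm : ∀ x ∈ Set.Icc (-b) (-a), -x ∈ Set.Icc a b := fun x hx =>
    ⟨by linarith [hx.2], by linarith [hx.1]⟩
  have := vdc1 (fun x => φ (-x)) (fun x => -φ' (-x)) (fun x => φ'' (-x)) (a := -b) (b := -a)
    (by linarith) hδ
    (fun x hx => by
      refine ((h1 (-x) (hm x hx)).comp x (hasDerivAt_neg x)).congr_deriv ?_
      ring)
    (fun x hx => by
      refine ((h2 (-x) (hm x hx)).comp x (hasDerivAt_neg x)).neg.congr_deriv ?_
      ring)
    (hc.comp continuous_neg.continuousOn hm) (fun x hx => hpos _ (hm x hx))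
    (fun x hx => by have := hd _ (hm x hx); linarith)
  rwa [intervalIntegral.integral_comp_neg (fun x => Complex.exp ((φ x : ℂ) * I)), neg_neg,
    neg_neg] at this

open Complex in
lemma vdc2 (φ φ' φ'' : ℝ → ℝ) {a b l : ℝ} (hab : a ≤ b) (hl : 0 < l)
    (h1 : ∀ x ∈ Set.Icc a b, HasDerivAt φ (φ' x) x)
    (h2 : ∀ x ∈ Set.Icc a b, HasDerivAt φ' (φ'' x) x)
    (hc : ContinuousOn φ'' (Set.Icc a b))
    (hpos : ∀ x ∈ Set.Icc a b, l ≤ φ'' x) :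
    ‖∫ x in a..b, Complex.exp ((φ x : ℂ) * I)‖ ≤ 8 / Real.sqrt l := by
  have c1 : ContinuousOn φ' (Set.Icc a b) := fun x hx => (h2 x hx).continuousAt.continuousWithinAt
  have c0 : ContinuousOn φ (Set.Icc a b) := fun x hx => (h1 x hx).continuousAt.continuousWithinAt
  have ce : ContinuousOn (fun x => Complex.exp ((φ x : ℂ) * I)) (Set.Icc a b) := by
    fun_prop
  have hmono : MonotoneOn (fun x => φ' x - l * x) (Set.Icc a b) := by
    refine monotoneOn_of_hasDerivWithinAt_nonneg (convex_Icc a b)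
      (f' := fun x => φ'' x - l) (by fun_prop) ?_ ?_
    · intro x hx
      have hx' := interior_subset hx
      have := ((h2 x hx').sub ((hasDerivAt_id x).const_mul l))
      exact (this.congr_deriv (by simp)).hasDerivWithinAt
    · intro x hx
      have := hpos x (interior_subset hx)
      simpa using this
  obtain ⟨c, hcI, hcr, hcl⟩ : ∃ c ∈ Set.Icc a b, (c < b → 0 ≤ φ' c) ∧ (a < c → φ' c ≤ 0) := by
    by_cases ha : 0 ≤ φ' a
    · exact ⟨a, ⟨le_rfl, hab⟩, fun _ => ha, fun h => absurd h (lt_irrefl _)⟩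
    by_cases hb : φ' b ≤ 0
    · exact ⟨b, ⟨hab, le_rfl⟩, fun h => absurd h (lt_irrefl _), fun _ => hb⟩
    push Not at ha hb
    obtain ⟨c, hc, h0⟩ := intermediate_value_Icc hab c1 ⟨ha.le, hb.le⟩
    exact ⟨c, hc, fun _ => h0.ge, fun _ => h0.le⟩
  set s := Real.sqrt l with hs
  have hs0 : 0 < s := Real.sqrt_pos.mpr hl
  have hss : s * s = l := Real.mul_self_sqrt hl.le
  have hsi : l * s⁻¹ = s := by rw [← hss]; field_simp
  set p := max a (c - s⁻¹) with hp
  set q := min b (c + s⁻¹) with hq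
  have hsi0 : 0 < s⁻¹ := by positivity
  have hap : a ≤ p := le_max_left _ _
  have hpc : p ≤ c := max_le hcI.1 (by linarith)
  have hcq : c ≤ q := le_min hcI.2 (by linarith)
  have hqb : q ≤ b := min_le_left _ _
  have ii : ∀ u v, u ∈ Set.Icc a b → v ∈ Set.Icc a b →
      IntervalIntegrable (fun x => Complex.exp ((φ x : ℂ) * I)) volume u v := fun u v hu hv =>
    (ce.mono (Set.uIcc_subset_Icc hu hv)).intervalIntegrable
  have mp : p ∈ Set.Icc a b := ⟨hap, hpc.trans hcI.2⟩
  have mq : q ∈ Set.Icc a b := ⟨hcI.1.trans hcq, hqb⟩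
  have ma : a ∈ Set.Icc a b := ⟨le_rfl, hab⟩
  have mb : b ∈ Set.Icc a b := ⟨hab, le_rfl⟩
  have split : ∫ x in a..b, Complex.exp ((φ x : ℂ) * I) =
      (∫ x in a..p, Complex.exp ((φ x : ℂ) * I)) + (∫ x in p..q, Complex.exp ((φ x : ℂ) * I))
      + ∫ x in q..b, Complex.exp ((φ x : ℂ) * I) := by
    rw [intervalIntegral.integral_add_adjacent_intervals (ii _ _ ma mp) (ii _ _ mp mq),
      intervalIntegral.integral_add_adjacent_intervals (ii _ _ ma mq) (ii _ _ mq mb)]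
  have B1 : ‖∫ x in a..p, Complex.exp ((φ x : ℂ) * I)‖ ≤ 3 / s := by
    rcases hap.eq_or_lt with h | h
    · rw [← h]; simp; positivity
    have hpe : p = c - s⁻¹ := by
      rcases max_choice a (c - s⁻¹) with h' | h'
      · rw [← hp] at h'; exact absurd h' h.ne'
      · exact h'
    have sub : Set.Icc a p ⊆ Set.Icc a b := Set.Icc_subset_Icc le_rfl mp.2
    refine vdc1' φ φ' φ'' hap hs0 (fun x hx => h1 x (sub hx)) (fun x hx => h2 x (sub hx))
      (hc.mono sub) (fun x hx => hl.le.trans (hpos x (sub hx))) (fun x hx => ?_)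
    have := hmono (sub hx) hcI (hx.2.trans hpc)
    simp only at this
    have k1 := hcl (h.trans_le hpc)
    have k2 : x ≤ c - s⁻¹ := hpe ▸ hx.2
    have k3 : l * x ≤ l * (c - s⁻¹) := by gcongr
    rw [mul_sub, hsi] at k3
    linarith
  have B3 : ‖∫ x in q..b, Complex.exp ((φ x : ℂ) * I)‖ ≤ 3 / s := by
    rcases hqb.eq_or_lt with h | h
    · rw [h]; simp; positivity
    have hqe : q = c + s⁻¹ := by
      rcases min_choice b (c + s⁻¹) with h' | h'
      · rw [← hq] at h'; exact absurd h' h.ne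
      · exact h'
    have sub : Set.Icc q b ⊆ Set.Icc a b := Set.Icc_subset_Icc mq.1 le_rfl
    refine vdc1 φ φ' φ'' hqb hs0 (fun x hx => h1 x (sub hx)) (fun x hx => h2 x (sub hx))
      (hc.mono sub) (fun x hx => hl.le.trans (hpos x (sub hx))) (fun x hx => ?_)
    have := hmono hcI (sub hx) (hcq.trans hx.1)
    simp only at this
    have k1 := hcr (hcq.trans_lt h)
    have k2 : c + s⁻¹ ≤ x := hqe ▸ hx.1
    have k3 : l * (c + s⁻¹) ≤ l * x := by gcongr
    rw [mul_add, hsi] at k3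
    linarith
  have B2 : ‖∫ x in p..q, Complex.exp ((φ x : ℂ) * I)‖ ≤ 2 / s := by
    have := intervalIntegral.norm_integral_le_of_norm_le_const (a := p) (b := q) (C := 1)
      (f := fun x => Complex.exp ((φ x : ℂ) * I))
      (fun x _ => by rw [Complex.norm_exp_ofReal_mul_I])
    refine this.trans ?_
    rw [abs_of_nonneg (by linarith), one_mul, div_eq_mul_inv]
    have : c - s⁻¹ ≤ p := le_max_right _ _
    have : q ≤ c + s⁻¹ := min_le_right _ _
    linarith
  rw [split]
  refine (norm_add_le _ _).trans ?_
  have := norm_add_le (∫ x in a..p, Complex.exp ((φ x : ℂ) * I)) (∫ x in p..q, Complex.exp ((φ x : ℂ) * I))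
  have e : 8 / s = 3 / s + 2 / s + 3 / s := by ring
  linarith

open Complex in
lemma vdc2' (φ φ' φ'' : ℝ → ℝ) {a b l : ℝ} (hab : a ≤ b) (hl : 0 < l)
    (h1 : ∀ x ∈ Set.Icc a b, HasDerivAt φ (φ' x) x)
    (h2 : ∀ x ∈ Set.Icc a b, HasDerivAt φ' (φ'' x) x)
    (hc : ContinuousOn φ'' (Set.Icc a b))
    (hpos : ∀ x ∈ Set.Icc a b, φ'' x ≤ -l) :
    ‖∫ x in a..b, Complex.exp ((φ x : ℂ) * I)‖ ≤ 8 / Real.sqrt l := by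
  have := vdc2 (fun x => -φ x) (fun x => -φ' x) (fun x => -φ'' x) hab hl
    (fun x hx => (h1 x hx).neg) (fun x hx => (h2 x hx).neg) hc.neg
    (fun x hx => by linarith [hpos x hx])
  have e : ∀ x, Complex.exp (((-φ x : ℝ) : ℂ) * I) =
      (starRingEnd ℂ) (Complex.exp ((φ x : ℂ) * I)) := by
    intro x
    rw [← Complex.exp_conj]
    simp
  simp_rw [e] at this
  have h := intervalIntegral.intervalIntegral_conj (𝕜 := ℂ) (μ := volume) (a := a) (b := b) (f := fun x => Complex.exp ((φ x : ℂ) * I))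
  rw [h] at this
  simpa using this
end Whit

namespace Whit

lemma hasDerivAt_tanh (y : ℝ) : HasDerivAt Real.tanh (1 - Real.tanh y ^ 2) y := by
  have h := (Real.hasDerivAt_sinh y).div (Real.hasDerivAt_cosh y) (Real.cosh_pos y).ne'
  have e : Real.tanh = (fun y => Real.sinh y / Real.cosh y) := by
    ext z; exact Real.tanh_eq_sinh_div_cosh z
  rw [e]
  refine h.congr_deriv ?_
  have := (Real.cosh_pos y).ne'
  field_simp

lemma tanh_pos' {y : ℝ} (hy : 0 < y) : 0 < Real.tanh y := by
  rw [Real.tanh_eq_sinh_div_cosh]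
  exact div_pos (Real.sinh_pos_iff.2 hy) (Real.cosh_pos y)

def q1 (y : ℝ) : ℝ := (Real.tanh y + y * (1 - Real.tanh y ^ 2)) / (2 * Real.sqrt (y * Real.tanh y))

def qD (y : ℝ) : ℝ := (Real.tanh y - y * (1 - Real.tanh y ^ 2)) ^ 2 +
  4 * y ^ 2 * (1 - Real.tanh y ^ 2) * Real.tanh y ^ 2

def q2 (y : ℝ) : ℝ := - qD y / (4 * (y * Real.tanh y) * Real.sqrt (y * Real.tanh y))

lemma hasDerivAt_g (y : ℝ) : HasDerivAt (fun y => y * Real.tanh y)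
    (Real.tanh y + y * (1 - Real.tanh y ^ 2)) y := by
  refine ((hasDerivAt_id y).mul (hasDerivAt_tanh y)).congr_deriv ?_
  simp

lemma hasDerivAt_q {y : ℝ} (hy : 0 < y) :
    HasDerivAt (fun y => Real.sqrt (y * Real.tanh y)) (q1 y) y := by
  have hg : y * Real.tanh y ≠ 0 := (mul_pos hy (tanh_pos' hy)).ne'
  exact (hasDerivAt_g y).sqrt hg

lemma hasDerivAt_q1 {y : ℝ} (hy : 0 < y) : HasDerivAt q1 (q2 y) y := by
  have hg0 : 0 < y * Real.tanh y := (mul_pos hy (tanh_pos' hy))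
  have hs0 : 0 < Real.sqrt (y * Real.tanh y) := Real.sqrt_pos.2 hg0
  have ht := hasDerivAt_tanh y
  have hn : HasDerivAt (fun y => Real.tanh y + y * (1 - Real.tanh y ^ 2))
      ((1 - Real.tanh y ^ 2) + ((1 - Real.tanh y ^ 2) +
        y * (-(2 * Real.tanh y * (1 - Real.tanh y ^ 2))))) y := by
    have h1 := ((hasDerivAt_const y (1:ℝ)).sub (ht.pow 2))
    refine (ht.add ((hasDerivAt_id y).mul h1)).congr_deriv ?_
    simp
  have := hn.div ((hasDerivAt_q hy).const_mul 2) (by positivity)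
  refine this.congr_deriv ?_
  unfold q2 qD q1
  have hsq : Real.sqrt (y * Real.tanh y) ^ 2 = y * Real.tanh y := Real.sq_sqrt hg0.le
  set s := Real.sqrt (y * Real.tanh y) with hs
  set τ := Real.tanh y
  rw [← hsq]
  field_simp
  have : s ^ 2 * 2 = 2 * (y * τ) := by rw [hsq]; ring
  ring_nf
  have e4 : s ^ 2 = y * τ := hsq
  simp only [e4]
  ring

lemma cosh_lb (y : ℝ) (hy : 0 ≤ y) : 1 + y ^ 2 / 2 ≤ Real.cosh y := by
  have h1 : Real.cosh y = 1 + 2 * Real.sinh (y / 2) ^ 2 := by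
    have := Real.cosh_two_mul (y / 2)
    rw [show 2 * (y / 2) = y by ring, Real.cosh_sq] at this
    linarith
  have h2 : y / 2 ≤ Real.sinh (y / 2) := Real.self_le_sinh_iff.2 (by linarith)
  rw [h1]
  nlinarith

lemma tanh_sq (y : ℝ) : 1 - Real.tanh y ^ 2 = 1 / Real.cosh y ^ 2 := by
  rw [Real.tanh_eq_sinh_div_cosh]
  have := (Real.cosh_pos y).ne'
  field_simp
  rw [Real.cosh_sq]; ring

lemma tanh_le_self {y : ℝ} (hy : 0 ≤ y) : Real.tanh y ≤ y := by
  have hm : MonotoneOn (fun y => y - Real.tanh y) (Set.Ici 0) := by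
    refine monotoneOn_of_hasDerivWithinAt_nonneg (convex_Ici 0)
      (f' := fun x => 1 - (1 - Real.tanh x ^ 2)) ?_ ?_ ?_
    · intro x _
      exact ((hasDerivAt_id x).sub (hasDerivAt_tanh x)).continuousAt.continuousWithinAt
    · intro x _
      exact ((hasDerivAt_id x).sub (hasDerivAt_tanh x)).hasDerivWithinAt
    · intro x _
      simp only [sub_sub_cancel]; positivity
  have := hm (Set.mem_Ici.2 le_rfl) (Set.mem_Ici.2 hy) hy
  simpa using this

lemma q2_bound {y : ℝ} (hy : 0 < y) : q2 y ≤ -(1 / 64 * min y (1 / (y * Real.sqrt y))) := by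
  have ht0 := tanh_pos' hy
  have ht1 : Real.tanh y < 1 := Real.tanh_lt_one y
  have hty := tanh_le_self hy.le
  have hg0 : 0 < y * Real.tanh y := mul_pos hy ht0
  have hs0 : 0 < Real.sqrt (y * Real.tanh y) := Real.sqrt_pos.2 hg0
  have hc0 := Real.cosh_pos y
  have hsech := tanh_sq y
  have hs1 : 0 ≤ 1 - Real.tanh y ^ 2 := by rw [hsech]; positivity
  unfold q2
  rw [neg_div, neg_le_neg_iff, le_div_iff₀ (by positivity)]
  by_cases h1 : y ≤ 1
  · have hch : Real.cosh y ≤ 2 := by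
      have := Real.cosh_le_exp_half_sq y
      have h2 : Real.exp (y ^ 2 / 2) ≤ Real.exp (1 / 2) := Real.exp_le_exp.2 (by nlinarith)
      have h3 : Real.exp (1 / 2) ≤ 2 := by
        have e := Real.exp_one_lt_d9
        have : Real.exp (1/2) * Real.exp (1/2) = Real.exp 1 := by
          rw [← Real.exp_add]; norm_num
        nlinarith [Real.exp_pos (1/2)]
      linarith
    have hs : (1:ℝ) / 4 ≤ 1 - Real.tanh y ^ 2 := by
      rw [hsech]
      rw [div_le_div_iff₀ (by norm_num) (by positivity)]
      nlinarith
    have htl : y / 2 ≤ Real.tanh y := by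
      rw [Real.tanh_eq_sinh_div_cosh, div_le_div_iff₀ (by norm_num) hc0]
      have := Real.self_le_sinh_iff.2 hy.le
      nlinarith
    have hD : y ^ 4 / 4 ≤ qD y := by
      unfold qD
      have a1 : y ^ 2 / 4 ≤ Real.tanh y ^ 2 := by nlinarith
      have a2 : (1:ℝ) / 4 * (y ^ 2 / 4) ≤ (1 - Real.tanh y ^ 2) * Real.tanh y ^ 2 := by gcongr
      nlinarith [sq_nonneg (Real.tanh y - y * (1 - Real.tanh y ^ 2)), sq_nonneg y]
    have hgy : y * Real.tanh y ≤ y ^ 2 := by nlinarith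
    have hsy : Real.sqrt (y * Real.tanh y) ≤ y := by
      rw [Real.sqrt_le_left hy.le]; exact hgy
    refine le_trans ?_ hD
    calc 1 / 64 * min y (1 / (y * Real.sqrt y)) * (4 * (y * Real.tanh y) * Real.sqrt (y * Real.tanh y))
        ≤ 1 / 64 * y * (4 * y ^ 2 * y) := by
          gcongr
          exact min_le_left _ _
      _ ≤ y ^ 4 / 4 := by nlinarith [pow_pos hy 4]
  · push Not at h1
    have hcl := cosh_lb y hy.le
    have hch : 3 / 2 ≤ Real.cosh y := by nlinarith
    have hs : 1 - Real.tanh y ^ 2 ≤ 4 / 9 := by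
      rw [hsech, div_le_div_iff₀ (by positivity) (by norm_num)]
      nlinarith
    have htl : 0.74 ≤ Real.tanh y := by nlinarith
    have hys : y * (1 - Real.tanh y ^ 2) ≤ 0.48 := by
      rw [hsech, mul_one_div, div_le_iff₀ (by positivity)]
      have : 1.4 * y ≤ Real.cosh y := by nlinarith [sq_nonneg (y - 1.4)]
      nlinarith
    have hD : 1 / 16 ≤ qD y := by
      unfold qD
      have : 0 ≤ 4 * y ^ 2 * (1 - Real.tanh y ^ 2) * Real.tanh y ^ 2 := by positivity
      nlinarith
    have hgy : y * Real.tanh y ≤ y := by nlinarith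
    have hsy : Real.sqrt (y * Real.tanh y) ≤ Real.sqrt y := Real.sqrt_le_sqrt hgy
    refine le_trans ?_ hD
    have hsy0 : 0 < Real.sqrt y := Real.sqrt_pos.2 hy
    calc 1 / 64 * min y (1 / (y * Real.sqrt y)) * (4 * (y * Real.tanh y) * Real.sqrt (y * Real.tanh y))
        ≤ 1 / 64 * (1 / (y * Real.sqrt y)) * (4 * y * Real.sqrt y) := by
          gcongr
          exact min_le_right _ _
      _ ≤ 1 / 16 := by
          apply le_of_eq; field_simp; norm_num

/-- dispersion relation -/
def Pf (μ ξ : ℝ) : ℝ := ξ * Real.sqrt (Tsymb μ ξ)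

def Lam (N : ℝ) : ℝ := min N (1 / (N * Real.sqrt N))

lemma Lam_pos {N : ℝ} (hN : 0 < N) : 0 < Lam N := by
  have : 0 < Real.sqrt N := Real.sqrt_pos.2 hN
  unfold Lam; positivity

lemma Pf_eq {μ ξ : ℝ} (hμ : 0 < μ) (hξ : 0 < ξ) :
    Pf μ ξ = (Real.sqrt μ)⁻¹ * Real.sqrt ((Real.sqrt μ * ξ) * Real.tanh (Real.sqrt μ * ξ)) := by
  have hm : 0 < Real.sqrt μ := Real.sqrt_pos.2 hμ
  have hy : 0 < Real.sqrt μ * ξ := by positivity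
  unfold Pf Tsymb
  rw [if_neg hξ.ne', abs_of_pos hξ]
  have : (Real.sqrt μ * ξ) * Real.tanh (Real.sqrt μ * ξ) =
      (Real.sqrt μ * ξ) ^ 2 * (Real.tanh (Real.sqrt μ * ξ) / (Real.sqrt μ * ξ)) := by
    field_simp
  rw [this, Real.sqrt_mul (by positivity), Real.sqrt_sq hy.le]
  field_simp

lemma Tsymb_even (μ ξ : ℝ) : Tsymb μ (-ξ) = Tsymb μ ξ := by
  unfold Tsymb; simp

lemma Pf_odd (μ ξ : ℝ) : Pf μ (-ξ) = - Pf μ ξ := by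
  unfold Pf; rw [Tsymb_even]; ring

lemma hasDerivAt_Pf {μ ξ : ℝ} (hμ : 0 < μ) (hξ : 0 < ξ) :
    HasDerivAt (Pf μ) (q1 (Real.sqrt μ * ξ)) ξ := by
  have hm : 0 < Real.sqrt μ := Real.sqrt_pos.2 hμ
  have h1 : HasDerivAt (fun ξ => (Real.sqrt μ)⁻¹ * Real.sqrt ((Real.sqrt μ * ξ) * Real.tanh (Real.sqrt μ * ξ)))
      (q1 (Real.sqrt μ * ξ)) ξ := by
    have hl : HasDerivAt (fun ξ => Real.sqrt μ * ξ) (Real.sqrt μ) ξ := by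
      simpa using (hasDerivAt_id ξ).const_mul (Real.sqrt μ)
    refine (((hasDerivAt_q (y := Real.sqrt μ * ξ) (by positivity)).comp ξ hl).const_mul
      (Real.sqrt μ)⁻¹).congr_deriv ?_
    field_simp
  refine h1.congr_of_eventuallyEq ?_
  filter_upwards [lt_mem_nhds hξ] with z hz using Pf_eq hμ hz

lemma hasDerivAt_Pf' {μ ξ : ℝ} (hμ : 0 < μ) (hξ : 0 < ξ) :
    HasDerivAt (fun ξ => q1 (Real.sqrt μ * ξ)) (Real.sqrt μ * q2 (Real.sqrt μ * ξ)) ξ := by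
  have hm : 0 < Real.sqrt μ := Real.sqrt_pos.2 hμ
  have hl : HasDerivAt (fun ξ => Real.sqrt μ * ξ) (Real.sqrt μ) ξ := by
    simpa using (hasDerivAt_id ξ).const_mul (Real.sqrt μ)
  refine ((hasDerivAt_q1 (y := Real.sqrt μ * ξ) (by positivity)).comp ξ hl).congr_deriv ?_
  ring

lemma continuous_tanh' : Continuous Real.tanh :=
  continuous_iff_continuousAt.2 fun y => (hasDerivAt_tanh y).continuousAt

lemma continuousOn_q2 : ContinuousOn q2 (Set.Ioi 0) := by
  have := continuous_tanh'
  unfold q2 qD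
  refine ContinuousOn.div (by fun_prop) (by fun_prop) ?_
  intro y hy
  have hy' : 0 < y := hy
  have := tanh_pos' hy'
  have := Real.sqrt_pos.2 (mul_pos hy' this)
  positivity

lemma P2_bound {μ N ξ : ℝ} (hμ : 0 < μ) (hμ1 : μ ≤ 1) (hN : 0 < N) (h1 : N ≤ ξ) (h2 : ξ ≤ 2 * N) :
    Real.sqrt μ * q2 (Real.sqrt μ * ξ) ≤ -(1 / 256 * (μ * Lam N)) := by
  have hm : 0 < Real.sqrt μ := Real.sqrt_pos.2 hμ
  have hmm : Real.sqrt μ * Real.sqrt μ = μ := Real.mul_self_sqrt hμ.le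
  have hm1 : Real.sqrt μ ≤ 1 := Real.sqrt_le_iff.2 ⟨by norm_num, by linarith⟩
  have hξ : 0 < ξ := by linarith
  have hb := q2_bound (y := Real.sqrt μ * ξ) (by positivity)
  have hsN : 0 < Real.sqrt N := Real.sqrt_pos.2 hN
  have hkey : 1 / 4 * (Real.sqrt μ * Lam N) ≤ min (Real.sqrt μ * ξ)
      (1 / ((Real.sqrt μ * ξ) * Real.sqrt (Real.sqrt μ * ξ))) := by
    refine le_min ?_ ?_
    · have : Lam N ≤ N := min_le_left _ _
      have hL := Lam_pos hN
      have : Real.sqrt μ * Lam N ≤ Real.sqrt μ * ξ := by gcongr; linarith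
      have : 0 < Real.sqrt μ * Lam N := by positivity
      linarith
    · have hL : Lam N ≤ 1 / (N * Real.sqrt N) := min_le_right _ _
      have hs2 : Real.sqrt (Real.sqrt μ * ξ) ≤ 2 * Real.sqrt N := by
        have : Real.sqrt (Real.sqrt μ * ξ) ≤ Real.sqrt (4 * N) := by
          apply Real.sqrt_le_sqrt; nlinarith
        refine this.trans (le_of_eq ?_)
        rw [show (4:ℝ) * N = 2 ^ 2 * N by norm_num, Real.sqrt_mul (by positivity), Real.sqrt_sq (by norm_num)]
      have hx2 : Real.sqrt μ * ξ ≤ 2 * N := by nlinarith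
      calc 1 / 4 * (Real.sqrt μ * Lam N) ≤ 1 / 4 * (1 * (1 / (N * Real.sqrt N))) := by
            gcongr
            exact (Lam_pos hN).le
        _ = 1 / ((2 * N) * (2 * Real.sqrt N)) := by field_simp; norm_num
        _ ≤ _ := by
            have : 0 < Real.sqrt (Real.sqrt μ * ξ) := Real.sqrt_pos.2 (by positivity)
            gcongr
  have : Real.sqrt μ * q2 (Real.sqrt μ * ξ) ≤ Real.sqrt μ * (-(1 / 64 * (1 / 4 * (Real.sqrt μ * Lam N)))) := by
    gcongr
    linarith
  refine this.trans (le_of_eq ?_)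
  rw [← hmm]; ring_nf
  rw [Real.sqrt_sq hm.le]

/-- oscillating factor -/
def eph (μ x t ξ : ℝ) : ℂ := Complex.exp (((2 * Real.pi * (x * ξ - t * Pf μ ξ) : ℝ) : ℂ) * Complex.I)

lemma ker1 {μ N x t : ℝ} (hμ : 0 < μ) (hμ1 : μ ≤ 1) (hN : 0 < N) (ht : t ≠ 0) :
    ‖∫ ξ in N..(2 * N), eph μ x t ξ‖ ≤ 64 / Real.sqrt (|t| * (μ * Lam N)) := by
  have hL := Lam_pos hN
  have ha : 0 < |t| := abs_pos.2 ht
  have hpi := Real.pi_gt_three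
  have hl : 0 < |t| * (μ * Lam N) / 64 := by positivity
  have e : 8 / Real.sqrt (|t| * (μ * Lam N) / 64) = 64 / Real.sqrt (|t| * (μ * Lam N)) := by
    rw [Real.sqrt_div (by positivity), show (64:ℝ) = 8 ^ 2 by norm_num, Real.sqrt_sq (by norm_num)]
    have : 0 < Real.sqrt (|t| * (μ * Lam N)) := Real.sqrt_pos.2 (by positivity)
    field_simp
  have hm : 0 < Real.sqrt μ := Real.sqrt_pos.2 hμ
  have pos : ∀ ξ ∈ Set.Icc N (2 * N), 0 < ξ := fun ξ h => hN.trans_le h.1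
  have d1 : ∀ ξ ∈ Set.Icc N (2 * N), HasDerivAt (fun ξ => 2 * Real.pi * (x * ξ - t * Pf μ ξ))
      (2 * Real.pi * (x - t * q1 (Real.sqrt μ * ξ))) ξ := by
    intro ξ h
    refine ((((hasDerivAt_id ξ).const_mul x).sub ((hasDerivAt_Pf hμ (pos ξ h)).const_mul t)).const_mul
      (2 * Real.pi)).congr_deriv ?_
    ring
  have d2 : ∀ ξ ∈ Set.Icc N (2 * N), HasDerivAt (fun ξ => 2 * Real.pi * (x - t * q1 (Real.sqrt μ * ξ)))
      (2 * Real.pi * (- t * (Real.sqrt μ * q2 (Real.sqrt μ * ξ)))) ξ := by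
    intro ξ h
    refine (((hasDerivAt_const ξ x).sub ((hasDerivAt_Pf' hμ (pos ξ h)).const_mul t)).const_mul
      (2 * Real.pi)).congr_deriv ?_
    ring
  have c2 : ContinuousOn (fun ξ => 2 * Real.pi * (- t * (Real.sqrt μ * q2 (Real.sqrt μ * ξ))))
      (Set.Icc N (2 * N)) := by
    have : ContinuousOn (fun ξ => q2 (Real.sqrt μ * ξ)) (Set.Icc N (2 * N)) :=
      continuousOn_q2.comp (by fun_prop) (fun ξ h => mul_pos hm (pos ξ h))
    fun_prop
  rw [← e]
  rcases lt_or_gt_of_ne ht with h | h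
  · refine vdc2' _ _ _ (by linarith) hl d1 d2 c2 ?_
    intro ξ hξ
    have hb := P2_bound hμ hμ1 hN hξ.1 hξ.2
    rw [abs_of_neg h]
    have hB : 0 < 1 / 256 * (μ * Lam N) := by positivity
    have h1 : -t * (Real.sqrt μ * q2 (Real.sqrt μ * ξ)) ≤ -t * (-(1 / 256 * (μ * Lam N))) := by
      apply mul_le_mul_of_nonneg_left hb; linarith
    have h2 : 0 < -t * (1 / 256 * (μ * Lam N)) := by
      apply mul_pos _ hB; linarith
    nlinarith
  · refine vdc2 _ _ _ (by linarith) hl d1 d2 c2 ?_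
    intro ξ hξ
    have hb := P2_bound hμ hμ1 hN hξ.1 hξ.2
    rw [abs_of_pos h]
    have hB : 0 < 1 / 256 * (μ * Lam N) := by positivity
    have h1 : t * (Real.sqrt μ * q2 (Real.sqrt μ * ξ)) ≤ t * (-(1 / 256 * (μ * Lam N))) :=
      mul_le_mul_of_nonneg_left hb h.le
    have h2 : 0 < t * (1 / 256 * (μ * Lam N)) := mul_pos h hB
    nlinarith

def AN (N : ℝ) : Set ℝ := {ξ | N ≤ |ξ| ∧ |ξ| < 2 * N}

lemma measurableSet_AN (N : ℝ) : MeasurableSet (AN N) :=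
  (measurableSet_le measurable_const continuous_abs.measurable).inter
    (measurableSet_lt continuous_abs.measurable measurable_const)

lemma AN_eq {N : ℝ} (hN : 0 < N) : AN N = Set.Ico N (2 * N) ∪ Set.Ioc (-(2 * N)) (-N) := by
  ext ξ
  simp only [AN, Set.mem_ofPred_eq, Set.mem_union, Set.mem_Ico, Set.mem_Ioc]
  rcases le_total 0 ξ with h | h
  · rw [abs_of_nonneg h]
    constructor
    · intro h; left; exact h
    · rintro (h' | h')
      · exact h'
      · linarith
  · rw [abs_of_nonpos h]
    constructor
    · intro h; right; constructor <;> linarith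
    · rintro (h' | h')
      · linarith
      · constructor <;> linarith

lemma continuous_Tsymb {μ : ℝ} (hμ : 0 < μ) : Continuous (Tsymb μ) := by
  have hm : 0 < Real.sqrt μ := Real.sqrt_pos.2 hμ
  have htl : Filter.Tendsto (fun y => Real.tanh y / y) (nhdsWithin 0 {0}ᶜ) (nhds 1) := by
    have := (hasDerivAt_iff_tendsto_slope.1 (hasDerivAt_tanh 0))
    simp only [Real.tanh_zero] at this
    norm_num at this
    refine this.congr fun y => ?_
    simp [slope, div_eq_inv_mul]
  rw [continuous_iff_continuousAt]
  intro ξ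
  by_cases h : ξ = 0
  · subst h
    rw [continuousAt_iff_punctured_nhds]
    have h0 : Tsymb μ 0 = 1 := by simp [Tsymb]
    rw [h0]
    have hl : Filter.Tendsto (fun ξ => Real.sqrt μ * |ξ|) (nhdsWithin 0 {0}ᶜ) (nhdsWithin 0 {0}ᶜ) := by
      refine tendsto_nhdsWithin_iff.2 ⟨?_, ?_⟩
      · have : Filter.Tendsto (fun ξ : ℝ => Real.sqrt μ * |ξ|) (nhds 0) (nhds (Real.sqrt μ * |0|)) :=
          (by fun_prop : Continuous (fun ξ : ℝ => Real.sqrt μ * |ξ|)).tendsto 0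
        simp only [abs_zero, mul_zero] at this
        exact this.mono_left nhdsWithin_le_nhds
      · filter_upwards [self_mem_nhdsWithin] with z hz
        have : 0 < |z| := abs_pos.2 hz
        exact (by positivity : Real.sqrt μ * |z| ≠ 0)
    refine (htl.comp hl).congr' ?_
    filter_upwards [self_mem_nhdsWithin] with z hz
    have hz' : z ≠ 0 := hz
    simp [Tsymb, hz']
  · have : ContinuousAt (fun ξ => Real.tanh (Real.sqrt μ * |ξ|) / (Real.sqrt μ * |ξ|)) ξ := by
      have := continuous_tanh'
      have h3 : 0 < |ξ| := abs_pos.2 h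
      exact ContinuousAt.div (by fun_prop) (by fun_prop) (by positivity)
    refine this.congr ?_
    filter_upwards [isOpen_ne.mem_nhds h] with z hz
    have hz' : z ≠ 0 := hz
    simp [Tsymb, hz']

lemma continuous_Pf {μ : ℝ} (hμ : 0 < μ) : Continuous (Pf μ) := by
  have := continuous_Tsymb hμ
  unfold Pf; fun_prop

lemma continuous_eph {μ : ℝ} (hμ : 0 < μ) (x t : ℝ) : Continuous (eph μ x t) := by
  have := continuous_Pf hμ
  unfold eph; fun_prop

lemma norm_eph (μ x t ξ : ℝ) : ‖eph μ x t ξ‖ = 1 := Complex.norm_exp_ofReal_mul_I _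

lemma ker2 {μ N x t : ℝ} (hμ : 0 < μ) (hμ1 : μ ≤ 1) (hN : 0 < N) (ht : t ≠ 0) :
    ‖∫ ξ in AN N, eph μ x t ξ‖ ≤ 128 / Real.sqrt (|t| * (μ * Lam N)) := by
  have hc := continuous_eph hμ x t
  rw [AN_eq hN, setIntegral_union]
  rotate_left
  · rw [Set.disjoint_left]
    intro z h1 h2
    have := h1.1; have := h2.2; linarith
  · exact measurableSet_Ioc
  · exact (hc.integrableOn_Icc (a := N) (b := 2 * N)).mono_set Set.Ico_subset_Icc_self
  · exact (hc.integrableOn_Icc (a := -(2*N)) (b := -N)).mono_set Set.Ioc_subset_Icc_self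
  have e1 : ∫ ξ in Set.Ico N (2 * N), eph μ x t ξ = ∫ ξ in N..(2 * N), eph μ x t ξ := by
    rw [intervalIntegral.integral_of_le (by linarith), integral_Ico_eq_integral_Ioc]
  have e2 : ∫ ξ in Set.Ioc (-(2 * N)) (-N), eph μ x t ξ = ∫ ξ in N..(2 * N), eph μ (-x) (-t) ξ := by
    rw [← intervalIntegral.integral_of_le (by linarith),
      ← intervalIntegral.integral_comp_neg (fun ξ => eph μ x t ξ)]
    refine intervalIntegral.integral_congr fun ξ _ => ?_
    simp only [eph, Pf_odd]
    congr 3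
    ring
  rw [e1, e2]
  refine (norm_add_le _ _).trans ?_
  have k1 := ker1 (x := x) hμ hμ1 hN ht
  have k2 := ker1 (x := -x) (t := -t) hμ hμ1 hN (neg_ne_zero.2 ht)
  rw [abs_neg] at k2
  refine (add_le_add k1 k2).trans (le_of_eq ?_)
  ring
end Whit

namespace Whit

open Complex in
lemma lintegral_sq_eq {α : Type*} [MeasurableSpace α] {μ : Measure α} [IsFiniteMeasure μ] (u : α → ℂ)
    (hu : Measurable u) (B : ℝ) (hB : ∀ t, ‖u t‖ ≤ B) :
    ∫⁻ t, ‖u t‖ₑ ^ 2 ∂μ = ‖∫ t, (starRingEnd ℂ) (u t) * u t ∂μ‖ₑ := by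
  have e : ∀ t, (starRingEnd ℂ) (u t) * u t = ((‖u t‖ ^ 2 : ℝ) : ℂ) := by
    intro t; rw [Complex.conj_mul']; push_cast; rfl
  simp_rw [e]
  rw [integral_complex_ofReal]
  have hi : Integrable (fun t => ‖u t‖ ^ 2) μ := by
    refine Integrable.of_bound (by fun_prop) (B ^ 2) (Filter.Eventually.of_forall fun t => ?_)
    rw [Real.norm_of_nonneg (by positivity)]
    exact pow_le_pow_left₀ (norm_nonneg _) (hB t) 2
  have h1 := ofReal_integral_eq_lintegral_ofReal hi (Filter.Eventually.of_forall fun t => by positivity)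
  have h2 : ∀ t, ENNReal.ofReal (‖u t‖ ^ 2) = ‖u t‖ₑ ^ 2 := by
    intro t; rw [ENNReal.ofReal_pow (norm_nonneg _), ofReal_norm]
  simp_rw [h2] at h1
  rw [← h1, ← ofReal_norm, Complex.norm_real, Real.norm_of_nonneg]
  exact integral_nonneg fun t => by positivity

lemma sq_le_of (X Y Z M : ℝ≥0∞) (hX : X ≠ ⊤) (h1 : X ≤ Y ^ ((1:ℝ)/2) * Z ^ ((1:ℝ)/2)) (h2 : Z ≤ M * X) :
    X ≤ M * Y := by
  by_cases h0 : X = 0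
  · rw [h0]; exact zero_le
  have h3 : X * X ≤ Y * Z := by
    calc X * X ≤ (Y ^ ((1:ℝ)/2) * Z ^ ((1:ℝ)/2)) * (Y ^ ((1:ℝ)/2) * Z ^ ((1:ℝ)/2)) := by gcongr
      _ = (Y ^ ((1:ℝ)/2) * Y ^ ((1:ℝ)/2)) * (Z ^ ((1:ℝ)/2) * Z ^ ((1:ℝ)/2)) := by ring
      _ = Y * Z := by
        rw [← ENNReal.rpow_add_of_nonneg _ _ (by norm_num) (by norm_num),
          ← ENNReal.rpow_add_of_nonneg _ _ (by norm_num) (by norm_num)]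
        norm_num
  have h4 : X * X ≤ (M * Y) * X := by
    calc X * X ≤ Y * Z := h3
      _ ≤ Y * (M * X) := by gcongr
      _ = _ := by ring
  exact (ENNReal.mul_le_mul_iff_left h0 hX).1 h4

lemma cs (α : Type*) [MeasurableSpace α] {μ : Measure α} {f g : α → ℝ≥0∞} (hf : AEMeasurable f μ)
    (hg : AEMeasurable g μ) :
    ∫⁻ a, f a * g a ∂μ ≤ (∫⁻ a, f a ^ 2 ∂μ) ^ ((1:ℝ)/2) * (∫⁻ a, g a ^ 2 ∂μ) ^ ((1:ℝ)/2) := by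
  have := ENNReal.lintegral_mul_le_Lp_mul_Lq μ Real.HolderConjugate.two_two hf hg
  simpa using this

set_option maxHeartbeats 1000000 in
lemma ttstar {μ ν : Measure ℝ} [IsFiniteMeasure μ] [IsFiniteMeasure ν] (e : ℝ → ℝ → ℂ)
    (he : Measurable (Function.uncurry e)) (he1 : ∀ t ξ, ‖e t ξ‖ ≤ 1) (f : ℝ → ℂ)
    (hf : Measurable f) (B : ℝ) (hB : ∀ ξ, ‖f ξ‖ ≤ B) (M : ℝ≥0∞)
    (hM : ∀ t, ∫⁻ s, ‖∫ ξ, e t ξ * (starRingEnd ℂ) (e s ξ) ∂ν‖ₑ ∂μ ≤ M) :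
    ∫⁻ t, ‖∫ ξ, e t ξ * f ξ ∂ν‖ₑ ^ 2 ∂μ ≤ M * ∫⁻ ξ, ‖f ξ‖ₑ ^ 2 ∂ν := by
  have hB0 : 0 ≤ B := (norm_nonneg _).trans (hB 0)
  set u : ℝ → ℂ := fun t => ∫ ξ, e t ξ * f ξ ∂ν with hu
  have he' : Measurable (fun p : ℝ × ℝ => e p.1 p.2) := he
  have hem1 : ∀ t, Measurable (e t) := fun t => he.comp measurable_prodMk_left
  have hconj : Measurable (starRingEnd ℂ) := Complex.continuous_conj.measurable
  have mu : Measurable u := by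
    have : StronglyMeasurable (fun p : ℝ × ℝ => e p.1 p.2 * f p.2) :=
      (he'.mul (hf.comp measurable_snd)).stronglyMeasurable
    exact (this.integral_prod_right (ν := ν)).measurable
  set Bu := B * ν.real Set.univ with hBu
  have hBu0 : 0 ≤ Bu := by positivity
  have bu : ∀ t, ‖u t‖ ≤ Bu := by
    intro t
    refine norm_integral_le_of_norm_le_const (Filter.Eventually.of_forall fun ξ => ?_)
    rw [norm_mul]
    calc _ ≤ 1 * B := mul_le_mul (he1 t ξ) (hB ξ) (norm_nonneg _) zero_le_one
      _ = B := one_mul _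
  set W : ℝ → ℂ := fun ξ => ∫ t, (starRingEnd ℂ) (u t) * e t ξ ∂μ with hW
  have mW : Measurable W := by
    have : StronglyMeasurable (fun p : ℝ × ℝ => (starRingEnd ℂ) (u p.2) * e p.2 p.1) :=
      ((hconj.comp (mu.comp measurable_snd)).mul (he'.comp measurable_swap)).stronglyMeasurable
    exact (this.integral_prod_right (ν := μ)).measurable
  have bW : ∀ ξ, ‖W ξ‖ ≤ Bu * μ.real Set.univ := by
    intro ξ
    refine norm_integral_le_of_norm_le_const (Filter.Eventually.of_forall fun t => ?_)
    rw [norm_mul, RCLike.norm_conj]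
    calc _ ≤ Bu * 1 := mul_le_mul (bu t) (he1 t ξ) (norm_nonneg _) hBu0
      _ = Bu := mul_one _
  set X := ∫⁻ t, ‖u t‖ₑ ^ 2 ∂μ with hX
  set Z := ∫⁻ ξ, ‖W ξ‖ₑ ^ 2 ∂ν with hZ
  have eX : X = ‖∫ t, (starRingEnd ℂ) (u t) * u t ∂μ‖ₑ := lintegral_sq_eq u mu Bu bu
  have eZ : Z = ‖∫ ξ, (starRingEnd ℂ) (W ξ) * W ξ ∂ν‖ₑ := lintegral_sq_eq W mW _ bW
  have s1 : ∫ t, (starRingEnd ℂ) (u t) * u t ∂μ = ∫ ξ, f ξ * W ξ ∂ν := by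
    have a1 : ∀ t, (starRingEnd ℂ) (u t) * u t = ∫ ξ, (starRingEnd ℂ) (u t) * (e t ξ * f ξ) ∂ν := by
      intro t; rw [integral_const_mul]
    have a2 : ∀ ξ, f ξ * W ξ = ∫ t, (starRingEnd ℂ) (u t) * (e t ξ * f ξ) ∂μ := by
      intro ξ; rw [hW, ← integral_const_mul]; congr 1; ext t; ring
    simp_rw [a1, a2]
    refine integral_integral_swap ?_
    refine Integrable.of_bound (C := Bu * B) ?_ (Filter.Eventually.of_forall fun p => ?_)
    · exact ((hconj.comp (mu.comp measurable_fst)).mul (he'.mul (hf.comp measurable_snd))).aestronglyMeasurable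
    · simp only [Function.uncurry, norm_mul, RCLike.norm_conj]
      calc _ ≤ Bu * (1 * B) := by
            gcongr
            · exact bu _
            · exact he1 _ _
            · exact hB _
        _ = _ := by ring
  have h1 : X ≤ (∫⁻ ξ, ‖f ξ‖ₑ ^ 2 ∂ν) ^ ((1:ℝ)/2) * Z ^ ((1:ℝ)/2) := by
    rw [eX, s1]
    refine (enorm_integral_le_lintegral_enorm _).trans ?_
    simp_rw [enorm_mul]
    exact cs ℝ hf.enorm.aemeasurable mW.enorm.aemeasurable
  have s2 : ∫ ξ, (starRingEnd ℂ) (W ξ) * W ξ ∂ν = ∫ z : ℝ × ℝ,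
      (∫ ξ, ((starRingEnd ℂ) (u z.1) * e z.1 ξ) * (u z.2 * (starRingEnd ℂ) (e z.2 ξ)) ∂ν) ∂(μ.prod μ) := by
    have a1 : ∀ ξ, (starRingEnd ℂ) (W ξ) * W ξ = ∫ z : ℝ × ℝ,
        ((starRingEnd ℂ) (u z.1) * e z.1 ξ) * (u z.2 * (starRingEnd ℂ) (e z.2 ξ)) ∂(μ.prod μ) := by
      intro ξ
      rw [integral_prod_mul (fun t => (starRingEnd ℂ) (u t) * e t ξ) (fun s => u s * (starRingEnd ℂ) (e s ξ)),
        mul_comm]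
      congr 1
      rw [hW]
      simp only
      rw [← integral_conj]
      congr 1; ext t; simp
    simp_rw [a1]
    refine integral_integral_swap ?_
    refine Integrable.of_bound (C := (Bu * 1) * (Bu * 1)) ?_ (Filter.Eventually.of_forall fun p => ?_)
    · have m1 : Measurable (fun p : ℝ × ℝ × ℝ => e p.2.1 p.1) :=
        he'.comp ((measurable_fst.comp measurable_snd).prodMk measurable_fst)
      have m2 : Measurable (fun p : ℝ × ℝ × ℝ => e p.2.2 p.1) :=
        he'.comp ((measurable_snd.comp measurable_snd).prodMk measurable_fst)
      have m3 : Measurable (fun p : ℝ × ℝ × ℝ => u p.2.1) := mu.comp (measurable_fst.comp measurable_snd)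
      have m4 : Measurable (fun p : ℝ × ℝ × ℝ => u p.2.2) := mu.comp (measurable_snd.comp measurable_snd)
      exact (((hconj.comp m3).mul m1).mul (m4.mul (hconj.comp m2))).aestronglyMeasurable
    · simp only [Function.uncurry, norm_mul, RCLike.norm_conj]
      gcongr
      · exact bu _
      · exact he1 _ _
      · exact bu _
      · exact he1 _ _
  set K : ℝ → ℝ → ℂ := fun t s => ∫ ξ, e t ξ * (starRingEnd ℂ) (e s ξ) ∂ν with hK
  have hKs : ∀ t s, ‖K t s‖ₑ = ‖K s t‖ₑ := by
    intro t s
    have : K s t = (starRingEnd ℂ) (K t s) := by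
      rw [hK]; simp only
      rw [← integral_conj]
      congr 1; ext ξ; simp [mul_comm]
    rw [this, ← ofReal_norm, ← ofReal_norm, RCLike.norm_conj]
  have mK : Measurable (fun z : ℝ × ℝ => K z.1 z.2) := by
    have m1 : Measurable (fun p : (ℝ × ℝ) × ℝ => e p.1.1 p.2) :=
      he'.comp ((measurable_fst.comp measurable_fst).prodMk measurable_snd)
    have m2 : Measurable (fun p : (ℝ × ℝ) × ℝ => e p.1.2 p.2) :=
      he'.comp ((measurable_snd.comp measurable_fst).prodMk measurable_snd)
    have : StronglyMeasurable (fun p : (ℝ × ℝ) × ℝ => e p.1.1 p.2 * (starRingEnd ℂ) (e p.1.2 p.2)) :=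
      (m1.mul (hconj.comp m2)).stronglyMeasurable
    exact (this.integral_prod_right (ν := ν)).measurable
  have h2 : Z ≤ M * X := by
    rw [eZ, s2]
    refine (enorm_integral_le_lintegral_enorm _).trans ?_
    have a1 : ∀ z : ℝ × ℝ, ‖∫ ξ, ((starRingEnd ℂ) (u z.1) * e z.1 ξ) * (u z.2 * (starRingEnd ℂ) (e z.2 ξ)) ∂ν‖ₑ
        ≤ (1/2) * (‖u z.1‖ₑ ^ 2 * ‖K z.1 z.2‖ₑ) + (1/2) * (‖u z.2‖ₑ ^ 2 * ‖K z.2 z.1‖ₑ) := by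
      intro z
      have : ∫ ξ, ((starRingEnd ℂ) (u z.1) * e z.1 ξ) * (u z.2 * (starRingEnd ℂ) (e z.2 ξ)) ∂ν
          = ((starRingEnd ℂ) (u z.1) * u z.2) * K z.1 z.2 := by
        rw [hK]; simp only
        rw [← integral_const_mul]
        congr 1; ext ξ; ring
      rw [this, hKs z.2 z.1]
      rw [← ofReal_norm, ← ofReal_norm, ← ofReal_norm, ← ofReal_norm]
      rw [show (1/2 : ℝ≥0∞) = ENNReal.ofReal (1/2) by
        rw [ENNReal.ofReal_div_of_pos (by norm_num)]; simp]
      rw [← ENNReal.ofReal_pow (norm_nonneg _), ← ENNReal.ofReal_pow (norm_nonneg _),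
        ← ENNReal.ofReal_mul (by positivity), ← ENNReal.ofReal_mul (by positivity),
        ← ENNReal.ofReal_mul (by positivity), ← ENNReal.ofReal_mul (by positivity),
        ← ENNReal.ofReal_add (by positivity) (by positivity)]
      apply ENNReal.ofReal_le_ofReal
      rw [norm_mul, norm_mul, RCLike.norm_conj]
      have := two_mul_le_add_sq ‖u z.1‖ ‖u z.2‖
      have h3 := mul_le_mul_of_nonneg_right this (norm_nonneg (K z.1 z.2))
      nlinarith
    refine (lintegral_mono a1).trans ?_
    have mK1 : Measurable (fun z : ℝ × ℝ => ‖u z.1‖ₑ ^ 2 * ‖K z.1 z.2‖ₑ) :=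
      ((mu.comp measurable_fst).enorm.pow_const 2).mul mK.enorm
    have mK2 : Measurable (fun z : ℝ × ℝ => ‖u z.2‖ₑ ^ 2 * ‖K z.2 z.1‖ₑ) :=
      ((mu.comp measurable_snd).enorm.pow_const 2).mul (mK.comp measurable_swap).enorm
    rw [lintegral_add_left (mK1.const_mul _), lintegral_const_mul _ mK1, lintegral_const_mul _ mK2]
    have I1 : ∫⁻ z : ℝ × ℝ, ‖u z.1‖ₑ ^ 2 * ‖K z.1 z.2‖ₑ ∂(μ.prod μ) ≤ M * X := by
      rw [lintegral_prod _ mK1.aemeasurable]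
      simp only
      calc _ ≤ ∫⁻ t, ‖u t‖ₑ ^ 2 * M ∂μ := by
            refine lintegral_mono fun t => ?_
            have mKt : Measurable (fun y => ‖K t y‖ₑ) := (mK.comp measurable_prodMk_left).enorm
            rw [lintegral_const_mul _ mKt]
            gcongr
            exact hM t
        _ = M * X := by
            rw [lintegral_mul_const _ (mu.enorm.pow_const 2), mul_comm]
    have I2 : ∫⁻ z : ℝ × ℝ, ‖u z.2‖ₑ ^ 2 * ‖K z.2 z.1‖ₑ ∂(μ.prod μ) ≤ M * X := by
      rw [lintegral_prod_symm _ mK2.aemeasurable]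
      rw [lintegral_prod _ mK1.aemeasurable] at I1
      exact I1
    calc _ ≤ 1/2 * (M * X) + 1/2 * (M * X) := by gcongr
      _ = M * X := by
        rw [← add_mul]
        simp [ENNReal.inv_two_add_inv_two]
  have hXt : X ≠ ⊤ := by rw [eX]; exact enorm_ne_top
  exact sq_le_of X _ Z M hXt h1 h2
end Whit

namespace Whit

lemma int_sqrt {τ : ℝ} (hτ : 0 < τ) :
    ∫⁻ s in Set.Ioc 0 τ, ENNReal.ofReal (1 / Real.sqrt |s|) = ENNReal.ofReal (2 * Real.sqrt τ) := by
  have e : ∀ s ∈ Set.Ioc 0 τ, ENNReal.ofReal (1 / Real.sqrt |s|) = ENNReal.ofReal (s ^ (-(1/2) : ℝ)) := by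
    intro s hs
    rw [abs_of_pos hs.1, Real.sqrt_eq_rpow, Real.rpow_neg hs.1.le, one_div]
  rw [setLIntegral_congr_fun measurableSet_Ioc e]
  have hi : IntegrableOn (fun s : ℝ => s ^ (-(1/2) : ℝ)) (Set.Ioc 0 τ) := by
    have := intervalIntegral.intervalIntegrable_rpow' (a := 0) (b := τ) (r := -(1/2)) (by norm_num)
    rwa [intervalIntegrable_iff_integrableOn_Ioc_of_le hτ.le] at this
  rw [← ofReal_integral_eq_lintegral_ofReal hi]
  · rw [← intervalIntegral.integral_of_le hτ.le, integral_rpow (Or.inl (by norm_num))]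
    congr 1
    rw [Real.sqrt_eq_rpow]
    norm_num
    ring
  · filter_upwards [ae_restrict_mem measurableSet_Ioc] with s hs
    exact Real.rpow_nonneg hs.1.le _

lemma meas_sqrt : Measurable (fun s : ℝ => ENNReal.ofReal (1 / Real.sqrt |s|)) :=
  ENNReal.measurable_ofReal.comp
    ((continuous_abs.measurable.sqrt).const_div 1)

lemma int_sqrt2 {τ : ℝ} (hτ : 0 < τ) :
    ∫⁻ s in Set.Ioc (-τ) τ, ENNReal.ofReal (1 / Real.sqrt |s|) ≤ ENNReal.ofReal (4 * Real.sqrt τ) := by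
  rw [← Set.Ioc_union_Ioc_eq_Ioc (show -τ ≤ 0 by linarith) hτ.le]
  refine (lintegral_union_le _ _ _).trans ?_
  have h : ∫⁻ s in Set.Ioc (-τ) 0, ENNReal.ofReal (1 / Real.sqrt |s|) ≤ ENNReal.ofReal (2 * Real.sqrt τ) := by
    rw [← int_sqrt hτ, ← lintegral_indicator measurableSet_Ioc, ← lintegral_neg_eq_self,
      setLIntegral_congr (Ioc_ae_eq_Icc (a := 0) (b := τ)), ← lintegral_indicator measurableSet_Icc]
    refine lintegral_mono fun s => ?_
    simp only [Set.indicator_apply, Set.mem_Ioc, Set.mem_Icc, abs_neg]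
    split_ifs with h1 h2
    · exact le_rfl
    · exact absurd ⟨by linarith [h1.2], by linarith [h1.1]⟩ h2
    · exact zero_le
    · exact le_rfl
  rw [int_sqrt hτ]
  refine (add_le_add_left h _).trans ?_
  rw [← ENNReal.ofReal_add (by positivity) (by positivity)]
  apply ENNReal.ofReal_le_ofReal; linarith

lemma int_sqrt3 {a b : ℝ} (hab : a < b) (t : ℝ) :
    ∫⁻ s in Set.Ioc a b, ENNReal.ofReal (1 / Real.sqrt |t - s|) ≤ ENNReal.ofReal (5 * Real.sqrt (b - a)) := by
  set τ := b - a with hτd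
  have hτ : 0 < τ := by linarith
  have hsτ := Real.sqrt_pos.2 hτ
  have key : ∀ s, ENNReal.ofReal (1 / Real.sqrt |t - s|) ≤
      (Set.Ioc (-τ) τ).indicator (fun v => ENNReal.ofReal (1 / Real.sqrt |v|)) (t - s) +
        ENNReal.ofReal (1 / Real.sqrt τ) := by
    intro s
    by_cases h : t - s ∈ Set.Ioc (-τ) τ
    · rw [Set.indicator_of_mem h]; exact le_self_add
    · rw [Set.indicator_of_notMem h, zero_add]
      apply ENNReal.ofReal_le_ofReal
      have : τ ≤ |t - s| := by
        by_contra h'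
        push Not at h'
        have := abs_lt.1 h'
        exact h ⟨this.1, this.2.le⟩
      gcongr
  calc _ ≤ ∫⁻ s in Set.Ioc a b, ((Set.Ioc (-τ) τ).indicator (fun v => ENNReal.ofReal (1 / Real.sqrt |v|)) (t - s) +
        ENNReal.ofReal (1 / Real.sqrt τ)) := lintegral_mono key
    _ = (∫⁻ s in Set.Ioc a b, (Set.Ioc (-τ) τ).indicator (fun v => ENNReal.ofReal (1 / Real.sqrt |v|)) (t - s)) +
        ENNReal.ofReal (1 / Real.sqrt τ) * ENNReal.ofReal τ := by
      rw [lintegral_add_right _ measurable_const, lintegral_const]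
      simp [hτd]
    _ ≤ (∫⁻ s, (Set.Ioc (-τ) τ).indicator (fun v => ENNReal.ofReal (1 / Real.sqrt |v|)) (t - s)) +
        ENNReal.ofReal (1 / Real.sqrt τ) * ENNReal.ofReal τ := by
      gcongr
      exact Measure.restrict_le_self
    _ ≤ ENNReal.ofReal (4 * Real.sqrt τ) + ENNReal.ofReal (Real.sqrt τ) := by
      rw [lintegral_sub_left_eq_self (fun v => (Set.Ioc (-τ) τ).indicator (fun v => ENNReal.ofReal (1 / Real.sqrt |v|)) v),
        lintegral_indicator measurableSet_Ioc]
      gcongr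
      · exact int_sqrt2 hτ
      · rw [← ENNReal.ofReal_mul (by positivity)]
        apply ENNReal.ofReal_le_ofReal
        apply le_of_eq
        rw [one_div, inv_mul_eq_div, Real.div_sqrt]
    _ = _ := by
      rw [← ENNReal.ofReal_add (by positivity) (by positivity)]
      congr 1; ring

lemma eph_mul_conj (μ x y s t ξ : ℝ) : eph μ x s ξ * (starRingEnd ℂ) (eph μ y t ξ) = eph μ (x - y) (s - t) ξ := by
  unfold eph
  rw [← Complex.exp_conj, ← Complex.exp_add, map_mul, Complex.conj_ofReal, Complex.conj_I]
  congr 1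
  push_cast
  ring

lemma eph_mul (μ x y s t ξ : ℝ) : eph μ x s ξ * eph μ y t ξ = eph μ (x + y) (s + t) ξ := by
  unfold eph
  rw [← Complex.exp_add]
  congr 1
  push_cast
  ring

lemma measurable_eph {α : Type*} [MeasurableSpace α] {μ : ℝ} (hμ : 0 < μ) {x s ξ : α → ℝ}
    (hx : Measurable x) (hs : Measurable s) (hξ : Measurable ξ) :
    Measurable (fun p => eph μ (x p) (s p) (ξ p)) := by
  have := (continuous_Pf hμ).measurable.comp hξ
  unfold eph
  refine Complex.measurable_exp.comp (Measurable.mul_const (Complex.measurable_ofReal.comp ?_) _)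
  exact (((hx.mul hξ).sub (hs.mul this)).const_mul _)

lemma AN_finite {N : ℝ} (hN : 0 < N) : volume (AN N) < ⊤ := by
  have : AN N ⊆ Set.Icc (-(2 * N)) (2 * N) := by
    intro ξ h
    have := abs_le.1 h.2.le
    exact ⟨this.1, this.2⟩
  exact (measure_mono this).trans_lt (by simp)

def MM (μ N τ : ℝ) : ℝ≥0∞ := ENNReal.ofReal (640 * Real.sqrt τ / Real.sqrt (μ * Lam N))

lemma lin_est {μ N : ℝ} (hμ : 0 < μ) (hμ1 : μ ≤ 1) (hN : 0 < N) {a b : ℝ} (hab : a < b) (c : ℝ)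
    (x : ℝ → ℝ) (hx : Measurable x) (f : ℝ → ℂ) (hf : Measurable f) (B : ℝ) (hB : ∀ ξ, ‖f ξ‖ ≤ B) :
    ∫⁻ t in Set.Ioc a b, ‖∫ ξ in AN N, eph μ (x t) (t - c) ξ * f ξ‖ₑ ^ 2 ≤
      MM μ N (b - a) * ∫⁻ ξ in AN N, ‖f ξ‖ₑ ^ 2 := by
  haveI : IsFiniteMeasure (volume.restrict (AN N)) := ⟨by
    rw [Measure.restrict_apply_univ]; exact AN_finite hN⟩
  have hL := Lam_pos hN
  refine ttstar (fun t ξ => eph μ (x t) (t - c) ξ) ?_ (fun t ξ => (norm_eph _ _ _ _).le) f hf B hB _ ?_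
  · exact measurable_eph hμ (hx.comp measurable_fst) (measurable_fst.sub_const c) measurable_snd
  · intro t
    simp_rw [eph_mul_conj, sub_sub_sub_cancel_right]
    have hk : 0 < Real.sqrt (μ * Lam N) := Real.sqrt_pos.2 (by positivity)
    calc ∫⁻ s in Set.Ioc a b, ‖∫ ξ in AN N, eph μ (x t - x s) (t - s) ξ‖ₑ
        ≤ ∫⁻ s in Set.Ioc a b, ENNReal.ofReal (128 / Real.sqrt (μ * Lam N)) *
            ENNReal.ofReal (1 / Real.sqrt |t - s|) := by
          refine lintegral_mono_ae ?_
          have : ∀ᵐ s ∂(volume.restrict (Set.Ioc a b)), s ≠ t :=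
            ae_restrict_of_ae (by simp [ae_iff])
          filter_upwards [this] with s hs
          rw [← ENNReal.ofReal_mul (by positivity), ← ofReal_norm]
          apply ENNReal.ofReal_le_ofReal
          refine (ker2 hμ hμ1 hN (sub_ne_zero.2 hs.symm)).trans (le_of_eq ?_)
          rw [Real.sqrt_mul (abs_nonneg _), div_mul_div_comm]
          congr 1
          · ring
          · ring
      _ ≤ ENNReal.ofReal (128 / Real.sqrt (μ * Lam N)) * ENNReal.ofReal (5 * Real.sqrt (b - a)) := by
          have m : Measurable (fun s => ENNReal.ofReal (1 / Real.sqrt |t - s|)) :=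
            meas_sqrt.comp (measurable_const.sub measurable_id)
          rw [lintegral_const_mul _ m]
          gcongr
          exact int_sqrt3 hab t
      _ = _ := by
          rw [← ENNReal.ofReal_mul (by positivity), MM]
          congr 1
          ring

lemma sq_add_le (a b : ℝ≥0∞) : (a + b) ^ 2 ≤ 2 * a ^ 2 + 2 * b ^ 2 := by
  have := ENNReal.rpow_add_le_mul_rpow_add_rpow a b (p := 2) (by norm_num)
  norm_num at this
  rw [← mul_add]
  exact_mod_cast this

lemma lintegral_sq_le {α : Type*} [MeasurableSpace α] {μ : Measure α} {f : α → ℝ≥0∞} (hf : AEMeasurable f μ) :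
    (∫⁻ a, f a ∂μ) ^ 2 ≤ μ Set.univ * ∫⁻ a, f a ^ 2 ∂μ := by
  have := cs α (μ := μ) (f := fun _ => 1) (g := f) aemeasurable_const hf
  simp only [one_mul, one_pow, lintegral_const] at this
  calc (∫⁻ a, f a ∂μ) ^ 2 ≤ ((μ Set.univ) ^ ((1:ℝ)/2) * (∫⁻ a, f a ^ 2 ∂μ) ^ ((1:ℝ)/2)) ^ 2 := by gcongr
    _ = _ := by
      rw [mul_pow, ← ENNReal.rpow_natCast, ← ENNReal.rpow_natCast, ← ENNReal.rpow_mul, ← ENNReal.rpow_mul]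
      norm_num

lemma int_est {μ N : ℝ} (hμ : 0 < μ) (hμ1 : μ ≤ 1) (hN : 0 < N) {a b : ℝ} (hab : a < b)
    (x : ℝ → ℝ) (hx : Measurable x) (f F : ℝ → ℝ → ℂ) (hf : Continuous (Function.uncurry f))
    (hF : Continuous (Function.uncurry F)) (B : ℝ) (hfB : ∀ t ξ, ‖f t ξ‖ ≤ B)
    (hFB : ∀ t ξ, ‖F t ξ‖ ≤ B)
    (hD : ∀ t ∈ Set.Icc a b, ∀ ξ, f t ξ = eph μ 0 (t - a) ξ * f a ξ +
      ∫ σ in a..t, eph μ 0 (t - σ) ξ * F σ ξ)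
    (D1 D2 : ℝ≥0∞) (h1 : ∫⁻ ξ in AN N, ‖f a ξ‖ₑ ^ 2 ≤ D1)
    (h2 : ∀ σ ∈ Set.Icc a b, ∫⁻ ξ in AN N, ‖F σ ξ‖ₑ ^ 2 ≤ D2) :
    ∫⁻ t in Set.Ioc a b, ‖∫ ξ in AN N, eph μ (x t) 0 ξ * f t ξ‖ₑ ^ 2 ≤
      2 * (MM μ N (b - a) * (D1 + ENNReal.ofReal (b - a) ^ 2 * D2)) := by
  haveI : IsFiniteMeasure (volume.restrict (AN N)) := ⟨by
    rw [Measure.restrict_apply_univ]; exact AN_finite hN⟩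
  have hB0 : 0 ≤ B := (norm_nonneg _).trans (hfB 0 0)
  set v : ℝ → ℝ → ℂ := fun t σ => ∫ ξ in AN N, eph μ (x t) (t - σ) ξ * F σ ξ with hv
  have mv : Measurable (fun p : ℝ × ℝ => v p.1 p.2) := by
    have : StronglyMeasurable (fun p : (ℝ × ℝ) × ℝ => eph μ (x p.1.1) (p.1.1 - p.1.2) p.2 * F p.1.2 p.2) := by
      refine Measurable.stronglyMeasurable (Measurable.mul ?_ ?_)
      · exact measurable_eph hμ (hx.comp (measurable_fst.comp measurable_fst))
          ((measurable_fst.comp measurable_fst).sub (measurable_snd.comp measurable_fst)) measurable_snd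
      · exact hF.measurable.comp ((measurable_snd.comp measurable_fst).prodMk measurable_snd)
    exact (this.integral_prod_right (ν := volume.restrict (AN N))).measurable
  have fm : ∀ t, Measurable (f t) := fun t => hf.measurable.comp measurable_prodMk_left
  have Fm : ∀ t, Measurable (F t) := fun t => hF.measurable.comp measurable_prodMk_left
  have pt : ∀ t ∈ Set.Ioc a b, ‖∫ ξ in AN N, eph μ (x t) 0 ξ * f t ξ‖ₑ ^ 2 ≤
      2 * ‖∫ ξ in AN N, eph μ (x t) (t - a) ξ * f a ξ‖ₑ ^ 2 +
      2 * (ENNReal.ofReal (b - a) * ∫⁻ σ in Set.Ioc a b, ‖v t σ‖ₑ ^ 2) := by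
    intro t ht
    have e1 : ∀ ξ, eph μ (x t) 0 ξ * f t ξ = eph μ (x t) (t - a) ξ * f a ξ +
        ∫ σ in Set.Ioc a t, eph μ (x t) (t - σ) ξ * F σ ξ := by
      intro ξ
      rw [hD t ⟨ht.1.le, ht.2⟩ ξ, mul_add, ← mul_assoc, eph_mul, add_zero, zero_add,
        intervalIntegral.integral_of_le ht.1.le, ← integral_const_mul]
      congr 2
      ext σ
      rw [← mul_assoc, eph_mul, add_zero, zero_add]
    have int2 : Integrable (Function.uncurry fun ξ σ => eph μ (x t) (t - σ) ξ * F σ ξ)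
        ((volume.restrict (AN N)).prod (volume.restrict (Set.Ioc a t))) := by
      refine Integrable.of_bound (C := 1 * B) ?_ (Filter.Eventually.of_forall fun p => ?_)
      · refine Measurable.aestronglyMeasurable (Measurable.mul ?_ ?_)
        · exact measurable_eph hμ measurable_const (measurable_const.sub measurable_snd) measurable_fst
        · exact hF.measurable.comp measurable_swap
      · simp only [Function.uncurry, norm_mul, norm_eph]
        gcongr
        exact hFB _ _
    have int1 : Integrable (fun ξ => eph μ (x t) (t - a) ξ * f a ξ) (volume.restrict (AN N)) := by
      refine Integrable.of_bound (C := 1 * B) ?_ (Filter.Eventually.of_forall fun p => ?_)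
      · exact Measurable.aestronglyMeasurable
          ((measurable_eph hμ measurable_const measurable_const measurable_id).mul (fm a))
      · simp only [norm_mul, norm_eph]
        gcongr
        exact hfB _ _
    have e2 : ∫ ξ in AN N, eph μ (x t) 0 ξ * f t ξ = (∫ ξ in AN N, eph μ (x t) (t - a) ξ * f a ξ) +
        ∫ σ in Set.Ioc a t, v t σ := by
      have i2 : Integrable (fun ξ => ∫ σ in Set.Ioc a t, eph μ (x t) (t - σ) ξ * F σ ξ)
          (volume.restrict (AN N)) := int2.integral_prod_left
      simp_rw [e1]
      rw [integral_add int1 i2, integral_integral_swap int2]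
    rw [e2]
    refine (pow_le_pow_left₀ zero_le (enorm_add_le _ _) 2).trans ((sq_add_le _ _).trans ?_)
    gcongr
    have m2 : Measurable (fun σ => ‖v t σ‖ₑ) := (mv.comp measurable_prodMk_left).enorm
    calc ‖∫ σ in Set.Ioc a t, v t σ‖ₑ ^ 2 ≤ (∫⁻ σ in Set.Ioc a b, ‖v t σ‖ₑ) ^ 2 := by
          gcongr
          refine (enorm_integral_le_lintegral_enorm _).trans ?_
          exact lintegral_mono_set (Set.Ioc_subset_Ioc le_rfl ht.2)
      _ ≤ _ := by
          refine (lintegral_sq_le m2.aemeasurable).trans (le_of_eq ?_)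
          simp
  have mv2 : Measurable (fun p : ℝ × ℝ => ‖v p.1 p.2‖ₑ ^ 2) := mv.enorm.pow_const 2
  have mvi : Measurable (fun t => ∫⁻ σ in Set.Ioc a b, ‖v t σ‖ₑ ^ 2) := mv2.lintegral_prod_right'
  calc _ ≤ ∫⁻ t in Set.Ioc a b, (2 * ‖∫ ξ in AN N, eph μ (x t) (t - a) ξ * f a ξ‖ₑ ^ 2 +
      2 * (ENNReal.ofReal (b - a) * ∫⁻ σ in Set.Ioc a b, ‖v t σ‖ₑ ^ 2)) :=
        setLIntegral_mono' measurableSet_Ioc pt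
    _ = 2 * (∫⁻ t in Set.Ioc a b, ‖∫ ξ in AN N, eph μ (x t) (t - a) ξ * f a ξ‖ₑ ^ 2) +
      2 * (ENNReal.ofReal (b - a) * ∫⁻ σ in Set.Ioc a b, ∫⁻ t in Set.Ioc a b, ‖v t σ‖ₑ ^ 2) := by
        rw [lintegral_add_right _ ((mvi.const_mul _).const_mul _), lintegral_const_mul' _ _ (by simp),
          lintegral_const_mul _ (mvi.const_mul _), lintegral_const_mul _ mvi]
        rw [lintegral_lintegral_swap mv2.aemeasurable]
    _ ≤ 2 * (MM μ N (b - a) * D1) + 2 * (ENNReal.ofReal (b - a) *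
        ∫⁻ σ in Set.Ioc a b, MM μ N (b - a) * D2) := by
        gcongr 2 * ?_ + 2 * (_ * ?_)
        · refine (lin_est hμ hμ1 hN hab a x hx (f a) (fm a) B (hfB a)).trans ?_
          gcongr
        · refine setLIntegral_mono' measurableSet_Ioc fun σ hσ => ?_
          refine (lin_est hμ hμ1 hN hab σ x hx (F σ) (Fm σ) B (hFB σ)).trans ?_
          gcongr
          exact h2 σ ⟨hσ.1.le, hσ.2⟩
    _ = _ := by
        rw [setLIntegral_const, Real.volume_Ioc]
        ring

lemma block_est {μ N : ℝ} (hμ : 0 < μ) (hμ1 : μ ≤ 1) (hN : 0 < N) {T : ℝ} (hT : 0 < T)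
    (x : ℝ → ℝ) (hx : Measurable x) (f F : ℝ → ℝ → ℂ) (hf : Continuous (Function.uncurry f))
    (hF : Continuous (Function.uncurry F)) (B : ℝ) (hfB : ∀ t ξ, ‖f t ξ‖ ≤ B)
    (hFB : ∀ t ξ, ‖F t ξ‖ ≤ B)
    (hD : ∀ a ∈ Set.Icc 0 T, ∀ t ∈ Set.Icc a T, ∀ ξ, f t ξ = eph μ 0 (t - a) ξ * f a ξ +
      ∫ σ in a..t, eph μ 0 (t - σ) ξ * F σ ξ)
    (D1 D2 : ℝ≥0∞) (h1 : ∀ σ ∈ Set.Icc 0 T, ∫⁻ ξ in AN N, ‖f σ ξ‖ₑ ^ 2 ≤ D1)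
    (h2 : ∀ σ ∈ Set.Icc 0 T, ∫⁻ ξ in AN N, ‖F σ ξ‖ₑ ^ 2 ≤ D2) (n : ℕ) (hn : 0 < n) :
    ∫⁻ t in Set.Ioc 0 T, ‖∫ ξ in AN N, eph μ (x t) 0 ξ * f t ξ‖ₑ ^ 2 ≤
      n * (2 * (MM μ N (T / n) * (D1 + ENNReal.ofReal (T / n) ^ 2 * D2))) := by
  have hn' : (0:ℝ) < n := by exact_mod_cast hn
  set τ := T / n with hτd
  have hτ : 0 < τ := by positivity
  have hnτ : (n:ℝ) * τ = T := by rw [hτd]; field_simp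
  have key : ∀ j : ℕ, j ≤ n → ∫⁻ t in Set.Ioc 0 (j * τ), ‖∫ ξ in AN N, eph μ (x t) 0 ξ * f t ξ‖ₑ ^ 2 ≤
      j * (2 * (MM μ N τ * (D1 + ENNReal.ofReal τ ^ 2 * D2))) := by
    intro j
    induction j with
    | zero => intro _; simp
    | succ j ih =>
      intro hj
      have hj0 : 0 ≤ (j:ℝ) * τ := by positivity
      have hjl : (j:ℝ) * τ ≤ ((j+1 : ℕ):ℝ) * τ := by push_cast; nlinarith
      have hjT : ((j+1 : ℕ):ℝ) * τ ≤ T := by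
        rw [← hnτ]; gcongr
      rw [← Set.Ioc_union_Ioc_eq_Ioc hj0 hjl]
      refine (lintegral_union_le _ _ _).trans ?_
      have e : ((j+1 : ℕ):ℝ) * τ - j * τ = τ := by push_cast; ring
      have := int_est hμ hμ1 hN (a := j * τ) (b := ((j+1 : ℕ):ℝ) * τ) (by linarith) x hx f F hf hF B hfB hFB
        (fun t ht => hD _ ⟨hj0, hjl.trans hjT⟩ t ⟨ht.1, ht.2.trans hjT⟩) D1 D2
        (h1 _ ⟨hj0, hjl.trans hjT⟩) (fun σ hσ => h2 σ ⟨hj0.trans hσ.1, hσ.2.trans hjT⟩)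
      rw [e] at this
      refine (add_le_add (ih (by omega)) this).trans (le_of_eq ?_)
      push_cast
      ring
  have := key n le_rfl
  rwa [hnτ] at this
end Whit

namespace Whit

def sqS (u : 𝓢(ℝ, ℂ)) : 𝓢(ℝ, ℂ) := SchwartzMap.pairing (ContinuousLinearMap.mul ℂ ℂ) u u

lemma sqS_apply (u : 𝓢(ℝ, ℂ)) (x : ℝ) : sqS u x = u x * u x := rfl

lemma pairing_bound (k n : ℕ) (f g : 𝓢(ℝ, ℂ)) :
    SchwartzMap.seminorm ℝ k n (SchwartzMap.pairing (ContinuousLinearMap.mul ℂ ℂ) f g) ≤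
      ∑ i ∈ Finset.range (n + 1), (n.choose i : ℝ) * SchwartzMap.seminorm ℝ k i f *
        SchwartzMap.seminorm ℝ 0 (n - i) g := by
  apply SchwartzMap.seminorm_le_bound
  · positivity
  intro x
  have h := norm_iteratedFDeriv_mul_le (𝕜 := ℝ) (f.smooth n) (g.smooth n) x le_rfl
  calc _ ≤ ‖x‖ ^ k * ∑ i ∈ Finset.range (n + 1), (n.choose i : ℝ) * ‖iteratedFDeriv ℝ i f x‖ *
        ‖iteratedFDeriv ℝ (n - i) g x‖ := by
        gcongr
        exact h
    _ = ∑ i ∈ Finset.range (n + 1), (n.choose i : ℝ) * (‖x‖ ^ k * ‖iteratedFDeriv ℝ i f x‖) *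
        (‖x‖ ^ 0 * ‖iteratedFDeriv ℝ (n - i) g x‖) := by
        rw [Finset.mul_sum]
        refine Finset.sum_congr rfl fun i _ => ?_
        ring
    _ ≤ _ := by
        gcongr
        · exact SchwartzMap.le_seminorm ℝ _ _ _ _
        · exact SchwartzMap.le_seminorm ℝ _ _ _ _

lemma continuous_sem (k n : ℕ) : Continuous (fun u : 𝓢(ℝ, ℂ) => SchwartzMap.seminorm ℝ k n u) :=
  (schwartz_withSeminorms ℝ ℝ ℂ).continuous_seminorm (k, n)

lemma continuous_sqS : Continuous sqS := by
  rw [continuous_iff_continuousAt]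
  intro u
  refine ((schwartz_withSeminorms ℝ ℝ ℂ).tendsto_nhds sqS (sqS u)).2 ?_
  rintro ⟨k, n⟩ e he
  have e1 : ∀ v : 𝓢(ℝ, ℂ), sqS v - sqS u =
      SchwartzMap.pairing (ContinuousLinearMap.mul ℂ ℂ) (v - u) (v + u) := by
    intro v
    ext x
    simp [sqS, SchwartzMap.pairing_apply_apply]
    ring
  have c : Continuous (fun v : 𝓢(ℝ, ℂ) => ∑ i ∈ Finset.range (n + 1), (n.choose i : ℝ) *
      SchwartzMap.seminorm ℝ k i (v - u) * SchwartzMap.seminorm ℝ 0 (n - i) (v + u)) := by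
    refine continuous_finset_sum _ fun i _ => ?_
    exact (continuous_const.mul ((continuous_sem k i).comp (continuous_id.sub continuous_const))).mul
      ((continuous_sem 0 (n - i)).comp (continuous_id.add continuous_const))
  have := c.tendsto u
  simp only [sub_self, map_zero, mul_zero, zero_mul, Finset.sum_const_zero] at this
  filter_upwards [this.eventually (gt_mem_nhds he)] with v hv
  refine lt_of_le_of_lt ?_ hv
  rw [e1]
  exact pairing_bound k n _ _

def clampT (T t : ℝ) : ℝ := max 0 (min t T)

lemma continuous_clampT (T : ℝ) : Continuous (clampT T) := by unfold clampT; fun_prop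

lemma clampT_mem {T : ℝ} (hT : 0 < T) (t : ℝ) : clampT T t ∈ Set.Icc 0 T := by
  unfold clampT
  exact ⟨le_max_left _ _, max_le hT.le (min_le_right _ _)⟩

lemma clampT_eq {T t : ℝ} (ht : t ∈ Set.Icc 0 T) : clampT T t = t := by
  unfold clampT
  rw [min_eq_left ht.2, max_eq_right ht.1]

lemma curve_cont {u : ℝ → 𝓢(ℝ, ℂ)} (hu : Continuous u) :
    Continuous (Function.uncurry fun t ξ => u t ξ) := by
  have : Continuous fun t => SchwartzMap.toBoundedContinuousFunctionCLM ℝ ℝ ℂ (u t) :=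
    (SchwartzMap.toBoundedContinuousFunctionCLM ℝ ℝ ℂ).continuous.comp hu
  have c : Continuous fun p : ℝ × ℝ => (SchwartzMap.toBoundedContinuousFunctionCLM ℝ ℝ ℂ (u p.1)) p.2 :=
    continuous_eval.comp ((this.comp continuous_fst).prodMk continuous_snd)
  exact c

lemma curve_bound {u : ℝ → 𝓢(ℝ, ℂ)} (hu : Continuous u) (T : ℝ) :
    ∃ C : ℝ, 0 ≤ C ∧ ∀ t ∈ Set.Icc 0 T, ∀ ξ, (1 + ξ ^ 2) ^ 2 * ‖u t ξ‖ ≤ C := by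
  have c : Continuous fun t => 2 * SchwartzMap.seminorm ℝ 0 0 (u t) + 2 * SchwartzMap.seminorm ℝ 4 0 (u t) :=
    (continuous_const.mul ((continuous_sem 0 0).comp hu)).add
      (continuous_const.mul ((continuous_sem 4 0).comp hu))
  obtain ⟨C, hC⟩ := (isCompact_Icc (a := (0:ℝ)) (b := T)).exists_bound_of_continuousOn c.continuousOn
  refine ⟨max C 0, le_max_right _ _, fun t ht ξ => ?_⟩
  have h0 := SchwartzMap.norm_pow_mul_le_seminorm ℝ (u t) 0 ξ
  have h4 := SchwartzMap.norm_pow_mul_le_seminorm ℝ (u t) 4 ξ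
  have h1 := (le_abs_self _).trans (hC t ht)
  refine le_trans ?_ (le_max_left _ _)
  refine le_trans ?_ h1
  have : (1 + ξ ^ 2) ^ 2 ≤ 2 + 2 * ‖ξ‖ ^ 4 := by
    rw [Real.norm_eq_abs, Even.pow_abs (by decide)]
    nlinarith [sq_nonneg (ξ ^ 2 - 1)]
  calc _ ≤ (2 + 2 * ‖ξ‖ ^ 4) * ‖u t ξ‖ := by gcongr
    _ = 2 * (‖ξ‖ ^ 0 * ‖u t ξ‖) + 2 * (‖ξ‖ ^ 4 * ‖u t ξ‖) := by ring
    _ ≤ _ := by gcongr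

end Whit

namespace Whit

lemma fInv_eq (g : ℝ → ℂ) (x : ℝ) : 𝓕⁻ g x = ∫ ξ, eph 0 x 0 ξ * g ξ := by
  rw [Real.fourierInv_eq']
  congr 1
  ext ξ
  simp [eph, mul_comm]

lemma cont_eph0 : Continuous (fun p : ℝ × ℝ => eph 0 p.1 0 p.2) := by
  unfold eph
  simp only [zero_mul, sub_zero]
  fun_prop

lemma bd_of {C ξ : ℝ} {z : ℂ} (h : (1 + ξ ^ 2) * ‖z‖ ≤ C) : ‖z‖ ≤ C * (1 + ξ ^ 2)⁻¹ := by
  have : 0 < 1 + ξ ^ 2 := by positivity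
  rw [← div_eq_mul_inv, le_div_iff₀ this]
  linarith

lemma duh1 {T : ℝ} (U G Γ : ℝ → ℝ → ℂ)  (hΓ : Continuous (Function.uncurry Γ)) {C : ℝ}
    (hΓb : ∀ t ξ, (1 + ξ ^ 2) * ‖Γ t ξ‖ ≤ C) (hUi : ∀ t, Integrable (U t))
    (hUG : ∀ t ∈ Set.Icc 0 T, 𝓕 (U t) = G t)
    (hder : ∀ t ∈ Set.Icc 0 T, ∀ x, HasDerivAt (fun τ => U τ x) (𝓕⁻ (Γ t) x) t) :
    ∀ t ∈ Set.Icc 0 T, ∀ ξ, G t ξ = G 0 ξ + ∫ σ in (0:ℝ)..t, Γ σ ξ := by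
  intro t ht ξ
  have h0 : (0:ℝ) ∈ Set.Icc 0 T := ⟨le_rfl, ht.1.trans ht.2⟩
  have hΓ1 : ∀ ξ, Continuous (fun σ => Γ σ ξ) := fun ξ => hΓ.comp (by fun_prop : Continuous fun σ : ℝ => (σ, ξ))
  have hΓ2 : ∀ σ, Continuous (Γ σ) := fun σ => hΓ.comp (by fun_prop : Continuous fun ξ : ℝ => (σ, ξ))
  have hi0 : Integrable (fun ξ : ℝ => C * (1 + ξ ^ 2)⁻¹) := integrable_inv_one_add_sq.const_mul C
  set h : ℝ → ℂ := fun ξ => ∫ σ in (0:ℝ)..t, Γ σ ξ with hh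
  have hc : Continuous h :=
    intervalIntegral.continuous_parametric_intervalIntegral_of_continuous'
      (f := fun ξ σ => Γ σ ξ) (hΓ.comp continuous_swap) 0 t
  have hi : Integrable h := by
    refine (hi0.mul_const t).mono' hc.aestronglyMeasurable (Filter.Eventually.of_forall fun ξ => ?_)
    refine (intervalIntegral.norm_integral_le_of_norm_le_const
      (C := C * (1 + ξ ^ 2)⁻¹) fun σ _ => bd_of (hΓb σ ξ)).trans ?_
    rw [sub_zero, abs_of_nonneg ht.1]
  have e0 : ∀ ξ x, ‖eph 0 x 0 ξ‖ = 1 := fun ξ x => norm_eph _ _ _ _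
  have contI : ∀ x, Continuous (fun σ => 𝓕⁻ (Γ σ) x) := by
    intro x
    simp_rw [fInv_eq]
    refine continuous_of_dominated (bound := fun ξ => C * (1 + ξ ^ 2)⁻¹) ?_ ?_ hi0 ?_
    · intro σ
      exact ((cont_eph0.comp (by fun_prop : Continuous fun ξ : ℝ => (x, ξ))).mul (hΓ2 σ)).aestronglyMeasurable
    · intro σ
      refine Filter.Eventually.of_forall fun ξ => ?_
      rw [norm_mul, e0, one_mul]
      exact bd_of (hΓb σ ξ)
    · refine Filter.Eventually.of_forall fun ξ => ?_
      exact continuous_const.mul (hΓ1 ξ)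
  have key : U t - U 0 = 𝓕⁻ h := by
    ext x
    have ftc := intervalIntegral.integral_eq_sub_of_hasDerivAt (a := 0) (b := t) (f := fun τ => U τ x)
      (f' := fun τ => 𝓕⁻ (Γ τ) x) (fun s hs => hder s (by
        rw [Set.uIcc_of_le ht.1] at hs
        exact ⟨hs.1, hs.2.trans ht.2⟩) x) ((contI x).intervalIntegrable _ _)
    rw [Pi.sub_apply, ← ftc, fInv_eq]
    simp_rw [fInv_eq]
    rw [intervalIntegral.integral_of_le ht.1]
    rw [integral_integral_swap]
    · congr 1
      ext ξ
      rw [integral_const_mul, hh]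
      simp only
      rw [intervalIntegral.integral_of_le ht.1]
    · have : Integrable (fun p : ℝ × ℝ => (1:ℝ) * (C * (1 + p.2 ^ 2)⁻¹))
          ((volume.restrict (Set.Ioc 0 t)).prod volume) :=
        (integrable_const (1:ℝ)).mul_prod hi0
      refine this.mono' ?_ (Filter.Eventually.of_forall fun p => ?_)
      · refine Continuous.aestronglyMeasurable ?_
        exact (cont_eph0.comp (by fun_prop : Continuous fun p : ℝ × ℝ => (x, p.2))).mul hΓ
      · simp only [Function.uncurry, norm_mul, e0]
        rw [one_mul, one_mul]
        exact bd_of (hΓb _ _)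
  have fe : 𝓕 (U t - U 0) = G t - G 0 := by
    rw [← hUG t ht, ← hUG 0 h0]
    ext ξ
    rw [Pi.sub_apply, Real.fourier_eq, Real.fourier_eq, Real.fourier_eq, ← integral_sub]
    · simp [smul_sub]
    · exact (Real.fourierIntegral_convergent_iff ξ).2 (hUi t)
    · exact (Real.fourierIntegral_convergent_iff ξ).2 (hUi 0)
  have hFi : Integrable (𝓕 h) := by
    have : Integrable (𝓕⁻ h) := by
      rw [← key]; exact (hUi t).sub (hUi 0)
    have := this.comp_neg
    refine this.congr (Filter.Eventually.of_forall fun x => ?_)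
    simp [Real.fourierInv_eq_fourier_neg]
  have := hc.fourier_fourierInv_eq hi hFi
  rw [← key, fe] at this
  have := congrFun this ξ
  rw [Pi.sub_apply] at this
  rw [show (∫ σ in (0:ℝ)..t, Γ σ ξ) = h ξ from rfl, ← this]
  ring

lemma hasDerivAt_eph (μ t ξ σ : ℝ) : HasDerivAt (fun σ => eph μ 0 (t - σ) ξ)
    (eph μ 0 (t - σ) ξ * (2 * Real.pi * Complex.I * Pf μ ξ)) σ := by
  unfold eph
  have h1 : HasDerivAt (fun σ : ℝ => 2 * Real.pi * (0 * ξ - (t - σ) * Pf μ ξ)) (2 * Real.pi * Pf μ ξ) σ := by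
    have := ((((hasDerivAt_id σ).const_sub t).mul_const (Pf μ ξ)).const_sub (0 * ξ)).const_mul (2 * Real.pi)
    refine this.congr_deriv ?_
    ring
  have h2 := (h1.ofReal_comp.mul_const Complex.I).cexp
  refine h2.congr_deriv ?_
  push_cast
  ring

lemma duh2 {μ T : ℝ} (v Φ : ℝ → ℝ → ℂ)
    (hv : Continuous (Function.uncurry v)) (hΦ : Continuous (Function.uncurry Φ))
    (h : ∀ t ∈ Set.Icc 0 T, ∀ ξ, v t ξ = v 0 ξ +
      ∫ σ in (0:ℝ)..t, (-(2 * Real.pi * Complex.I * Pf μ ξ) * v σ ξ + Φ σ ξ)) :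
    ∀ a ∈ Set.Icc 0 T, ∀ t ∈ Set.Icc a T, ∀ ξ,
      v t ξ = eph μ 0 (t - a) ξ * v a ξ + ∫ σ in a..t, eph μ 0 (t - σ) ξ * Φ σ ξ := by
  intro a ha t ht ξ
  have hΦ1 : Continuous (fun σ => Φ σ ξ) := hΦ.comp (by fun_prop : Continuous fun σ : ℝ => (σ, ξ))
  have hv1 : Continuous (fun σ => v σ ξ) := hv.comp (by fun_prop : Continuous fun σ : ℝ => (σ, ξ))
  have hγ : Continuous (fun σ => -(2 * Real.pi * Complex.I * Pf μ ξ) * v σ ξ + Φ σ ξ) := by fun_prop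
  set w : ℝ → ℂ := fun t => v 0 ξ + ∫ σ in (0:ℝ)..t, (-(2 * Real.pi * Complex.I * Pf μ ξ) * v σ ξ + Φ σ ξ) with hw
  have hwd : ∀ s, HasDerivAt w (-(2 * Real.pi * Complex.I * Pf μ ξ) * v s ξ + Φ s ξ) s := fun s =>
    ((hγ.integral_hasStrictDerivAt 0 s).hasDerivAt).const_add _
  have e : ∀ s ∈ Set.Icc 0 T, w s = v s ξ := fun s hs => (h s hs ξ).symm
  have ce : Continuous (fun σ => eph μ 0 (t - σ) ξ) :=
    continuous_iff_continuousAt.2 fun σ => (hasDerivAt_eph μ t ξ σ).continuousAt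
  have ftc := intervalIntegral.integral_eq_sub_of_hasDerivAt (a := a) (b := t)
    (f := fun σ => eph μ 0 (t - σ) ξ * w σ) (f' := fun σ => eph μ 0 (t - σ) ξ * Φ σ ξ)
    (fun s hs => by
      rw [Set.uIcc_of_le ht.1] at hs
      have := (hasDerivAt_eph μ t ξ s).mul (hwd s)
      refine this.congr_deriv ?_
      rw [e s ⟨ha.1.trans hs.1, hs.2.trans ht.2⟩]
      ring) ((ce.mul hΦ1).intervalIntegrable _ _)
  rw [ftc]
  rw [e t ⟨ha.1.trans ht.1, ht.2⟩, e a ha, sub_self]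
  have : eph μ 0 0 ξ = 1 := by simp [eph]
  rw [this]
  ring

end Whit

namespace Whit

lemma Tsymb_le_one {μ : ℝ} (hμ : 0 < μ) (ξ : ℝ) : Tsymb μ ξ ≤ 1 := by
  unfold Tsymb
  split_ifs with h
  · exact le_rfl
  · have : 0 < Real.sqrt μ * |ξ| := by positivity
    rw [div_le_one this]
    exact tanh_le_self this.le

lemma abs_le_one_add_sq (ξ : ℝ) : |ξ| ≤ 1 + ξ ^ 2 := by
  rw [← sq_abs]
  nlinarith [sq_nonneg (|ξ| - 1), abs_nonneg ξ]

lemma abs_Pf_le {μ : ℝ} (hμ : 0 < μ) (ξ : ℝ) : |Pf μ ξ| ≤ |ξ| := by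
  unfold Pf
  rw [abs_mul, abs_of_nonneg (Real.sqrt_nonneg _)]
  have : Real.sqrt (Tsymb μ ξ) ≤ 1 := Real.sqrt_le_one.2 (Tsymb_le_one hμ ξ)
  exact mul_le_of_le_one_right (abs_nonneg _) this

lemma sinv (u : 𝓢(ℝ, ℂ)) (x : ℝ) : 𝓕 (⇑(𝓕 u : 𝓢(ℝ, ℂ))) (-x) = u x := by
  rw [← Real.fourierInv_eq_fourier_neg, ← SchwartzMap.fourierInv_coe, FourierTransform.fourierInv_fourier_eq]

lemma fourier_sqS (u : 𝓢(ℝ, ℂ)) (ξ : ℝ) :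
    𝓕 (sqS u) ξ = ∫ ζ, 𝓕 u ζ * 𝓕 u (ξ - ζ) := by
  have : 𝓕 (sqS u) = SchwartzMap.convolution (ContinuousLinearMap.mul ℂ ℂ) (𝓕 u) (𝓕 u) := by
    have h : sqS u = 𝓕⁻ (SchwartzMap.convolution (ContinuousLinearMap.mul ℂ ℂ) (𝓕 u) (𝓕 u)) := by
      ext x
      rw [SchwartzMap.fourierInv_coe, Real.fourierInv_eq_fourier_neg, ← SchwartzMap.fourier_coe,
        SchwartzMap.fourier_convolution, SchwartzMap.pairing_apply_apply, SchwartzMap.fourier_coe, sinv]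
      rfl
    rw [h, FourierTransform.fourier_fourierInv_eq]
  rw [this, SchwartzMap.convolution_apply]
  rfl

lemma fourier_derivS (u : 𝓢(ℝ, ℂ)) (ξ : ℝ) :
    𝓕 (deriv ⇑u) ξ = 2 * Real.pi * Complex.I * ξ * 𝓕 u ξ := by
  rw [Real.fourier_deriv u.integrable u.differentiable (SchwartzMap.derivCLM ℝ ℂ u).integrable,
    SchwartzMap.fourier_coe]
  rfl

lemma derivS_eq (u : 𝓢(ℝ, ℂ)) (x : ℝ) :
    deriv ⇑u x = 𝓕⁻ (fun ξ : ℝ => 2 * Real.pi * Complex.I * ξ * 𝓕 u ξ) x := by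
  have h : (fun ξ : ℝ => 2 * Real.pi * Complex.I * ξ * 𝓕 u ξ) = ⇑(𝓕 (SchwartzMap.derivCLM ℝ ℂ u) : 𝓢(ℝ, ℂ)) := by
    ext ξ
    rw [← fourier_derivS, SchwartzMap.fourier_coe]
    rfl
  rw [h, ← SchwartzMap.fourierInv_coe, FourierTransform.fourierInv_fourier_eq]
  rfl

lemma eph_zero (μ ν x ξ : ℝ) : eph μ x 0 ξ = eph ν x 0 ξ := by simp [eph]

def cS (u : 𝓢(ℝ, ℝ)) : 𝓢(ℝ, ℂ) := SchwartzMap.postcompCLM Complex.ofRealCLM u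

lemma cS_apply (u : 𝓢(ℝ, ℝ)) (x : ℝ) : cS u x = (u x : ℂ) := rfl

lemma continuous_cS : Continuous cS := (SchwartzMap.postcompCLM Complex.ofRealCLM).continuous

lemma cS_coe (u : 𝓢(ℝ, ℝ)) : ⇑(cS u) = cc ⇑u := rfl

lemma deriv_cS (u : 𝓢(ℝ, ℝ)) : deriv ⇑(cS u) = cc (deriv ⇑u) := by
  ext x
  exact ((u.differentiable x).hasDerivAt.ofReal_comp).deriv

lemma deriv_sq (u : 𝓢(ℝ, ℝ)) (x : ℝ) :
    ((deriv (fun y => (u y) ^ 2) x : ℝ) : ℂ) = deriv ⇑(sqS (cS u)) x := by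
  have h : HasDerivAt (fun y => (u y) ^ 2) (deriv (fun y => (u y) ^ 2) x) x :=
    ((u.differentiable x).pow 2).hasDerivAt
  have e : ⇑(sqS (cS u)) = fun y => (((u y) ^ 2 : ℝ) : ℂ) := by
    ext y
    rw [sqS_apply, cS_apply]
    push_cast
    ring
  rw [e]
  exact h.ofReal_comp.deriv.symm

lemma setup {ε μ T : ℝ} (hμ : 0 < μ) (hT : 0 < T) (η : ℝ → 𝓢(ℝ, ℝ)) (hη : Continuous η)
    (heq : ∀ t ∈ Set.Icc (0 : ℝ) T, ∀ x : ℝ,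
                  HasDerivAt (fun τ => ((η τ x : ℝ) : ℂ))
                    (-(sqrtTmul μ (cc (deriv (⇑(η t)))) x +
                        (ε / 2 : ℂ) * ((deriv (fun y => (η t y) ^ 2) x : ℝ) : ℂ))) t) :
    ∃ v H : ℝ → ℝ → ℂ, Continuous (Function.uncurry v) ∧ Continuous (Function.uncurry H) ∧
      (∃ C : ℝ, 0 ≤ C ∧ (∀ t ξ, (1 + ξ ^ 2) ^ 2 * ‖v t ξ‖ ≤ C) ∧ ∀ t ξ, (1 + ξ ^ 2) ^ 2 * ‖H t ξ‖ ≤ C) ∧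
      (∀ t ∈ Set.Icc 0 T, v t = 𝓕 (cc (η t))) ∧
      (∀ t ∈ Set.Icc 0 T, ∀ ξ, H t ξ = ∫ ζ, v t ζ * v t (ξ - ζ)) ∧
      (∀ t ∈ Set.Icc 0 T, ∀ x, ((deriv (⇑(η t)) x : ℝ) : ℂ) =
        ∫ ξ, eph μ x 0 ξ * (2 * Real.pi * Complex.I * ξ * v t ξ)) ∧
      (∀ a ∈ Set.Icc 0 T, ∀ t ∈ Set.Icc a T, ∀ ξ,
        v t ξ = eph μ 0 (t - a) ξ * v a ξ + ∫ σ in a..t, eph μ 0 (t - σ) ξ *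
          (-(ε / 2 : ℂ) * (2 * Real.pi * Complex.I * ξ) * H σ ξ)) := by
  have cF : Continuous (fun u : 𝓢(ℝ, ℂ) => 𝓕 u) := (FourierTransform.fourierCLM ℂ 𝓢(ℝ, ℂ)).continuous
  have cv : Continuous (fun t => 𝓕 (cS (η t))) := cF.comp (continuous_cS.comp hη)
  have cH : Continuous (fun t => 𝓕 (sqS (cS (η t)))) :=
    cF.comp (continuous_sqS.comp (continuous_cS.comp hη))
  have cl := continuous_clampT T
  obtain ⟨C1, hC1, hb1⟩ := curve_bound cv T
  obtain ⟨C2, hC2, hb2⟩ := curve_bound cH T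
  set v : ℝ → ℝ → ℂ := fun t ξ => 𝓕 (cS (η (clampT T t))) ξ with hv
  set H : ℝ → ℝ → ℂ := fun t ξ => 𝓕 (sqS (cS (η (clampT T t)))) ξ with hH
  have ccv : Continuous (Function.uncurry v) := curve_cont (cv.comp cl)
  have ccH : Continuous (Function.uncurry H) := curve_cont (cH.comp cl)
  have bv : ∀ t ξ, (1 + ξ ^ 2) ^ 2 * ‖v t ξ‖ ≤ max C1 C2 := fun t ξ =>
    (hb1 _ (clampT_mem hT t) ξ).trans (le_max_left _ _)
  have bH : ∀ t ξ, (1 + ξ ^ 2) ^ 2 * ‖H t ξ‖ ≤ max C1 C2 := fun t ξ =>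
    (hb2 _ (clampT_mem hT t) ξ).trans (le_max_right _ _)
  have ve : ∀ t ∈ Set.Icc 0 T, v t = ⇑(𝓕 (cS (η t)) : 𝓢(ℝ, ℂ)) := by
    intro t ht
    simp only [hv, clampT_eq ht]
  have He : ∀ t ∈ Set.Icc 0 T, H t = ⇑(𝓕 (sqS (cS (η t))) : 𝓢(ℝ, ℂ)) := by
    intro t ht
    simp only [hH, clampT_eq ht]
  refine ⟨v, H, ccv, ccH, ⟨max C1 C2, le_max_of_le_left hC1, bv, bH⟩, ?_, ?_, ?_, ?_⟩
  · intro t ht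
    rw [ve t ht, SchwartzMap.fourier_coe, cS_coe]
  · intro t ht ξ
    rw [ve t ht, He t ht, fourier_sqS]
  · intro t ht x
    rw [ve t ht]
    have := derivS_eq (cS (η t)) x
    rw [deriv_cS, fInv_eq] at this
    simp_rw [eph_zero μ 0]
    exact this
  · refine duh2 v (fun σ ξ => -(ε / 2 : ℂ) * (2 * Real.pi * Complex.I * ξ) * H σ ξ) ccv ?_ ?_
    · have : Continuous (fun p : ℝ × ℝ => H p.1 p.2) := ccH
      unfold Function.uncurry
      fun_prop
    have cP := continuous_Pf hμ
    have ccv' : Continuous (fun p : ℝ × ℝ => v p.1 p.2) := ccv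
    have ccH' : Continuous (fun p : ℝ × ℝ => H p.1 p.2) := ccH
    refine duh1 (fun t x => (η t x : ℂ)) v _ ?_ (C := 2 * Real.pi * max C1 C2 + |ε / 2| * (2 * Real.pi) * max C1 C2) ?_ ?_ ?_ ?_
    · unfold Function.uncurry
      fun_prop
    · intro t ξ
      have e1 : ‖-(2 * Real.pi * Complex.I * Pf μ ξ : ℂ) * v t ξ‖ ≤ 2 * Real.pi * (1 + ξ ^ 2) * ‖v t ξ‖ := by
        have := (abs_Pf_le hμ ξ).trans (abs_le_one_add_sq ξ)
        simp only [norm_mul, norm_neg, Complex.norm_real, Complex.norm_I, Complex.norm_ofNat, mul_one,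
          Real.norm_eq_abs, abs_of_pos Real.pi_pos]
        gcongr
      have e2 : ‖-(ε / 2 : ℂ) * (2 * Real.pi * Complex.I * ξ) * H t ξ‖ ≤ |ε / 2| * (2 * Real.pi) * (1 + ξ ^ 2) * ‖H t ξ‖ := by
        have := (abs_le_one_add_sq ξ)
        have h2 : ‖(ε / 2 : ℂ)‖ = |ε / 2| := by
          rw [← Real.norm_eq_abs, ← Complex.norm_real]
          push_cast
          rfl
        simp only [norm_mul, norm_neg, h2, Complex.norm_real, Complex.norm_I, Complex.norm_ofNat, mul_one,
          Real.norm_eq_abs, abs_of_pos Real.pi_pos]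
        rw [mul_assoc (|ε / 2|) (2 * Real.pi)]
        gcongr
      calc _ ≤ (1 + ξ ^ 2) * (2 * Real.pi * (1 + ξ ^ 2) * ‖v t ξ‖ + |ε / 2| * (2 * Real.pi) * (1 + ξ ^ 2) * ‖H t ξ‖) := by
            gcongr
            exact (norm_add_le _ _).trans (add_le_add e1 e2)
        _ = 2 * Real.pi * ((1 + ξ ^ 2) ^ 2 * ‖v t ξ‖) + |ε / 2| * (2 * Real.pi) * ((1 + ξ ^ 2) ^ 2 * ‖H t ξ‖) := by ring
        _ ≤ _ := by
            gcongr
            · exact bv t ξ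
            · exact bH t ξ
    · intro t
      exact (cS (η t)).integrable
    · intro t ht
      rw [ve t ht, SchwartzMap.fourier_coe]
      rfl
    · intro t ht x
      refine (heq t ht x).congr_deriv ?_
      rw [deriv_sq, derivS_eq, sqrtTmul, ← deriv_cS, fInv_eq, fInv_eq, fInv_eq, ← integral_const_mul,
        ← integral_add, ← integral_neg]
      · congr 1
        ext ξ
        rw [fourier_derivS, ← ve t ht, ← He t ht]
        unfold Pf
        push_cast
        ring
      · have i1 : Integrable (fun ξ : ℝ => 𝓕 (deriv ⇑(cS (η t))) ξ) := by
          have : 𝓕 (deriv ⇑(cS (η t))) = ⇑(𝓕 (SchwartzMap.derivCLM ℝ ℂ (cS (η t))) : 𝓢(ℝ, ℂ)) := by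
            rw [SchwartzMap.fourier_coe]
            rfl
          rw [this]
          exact SchwartzMap.integrable _
        have cT := continuous_Tsymb hμ
        have ce : Continuous (fun ξ : ℝ => eph 0 x 0 ξ) :=
          cont_eph0.comp (by fun_prop : Continuous fun ξ : ℝ => (x, ξ))
        refine i1.norm.mono' ?_ (Filter.Eventually.of_forall fun ξ => ?_)
        · refine ce.aestronglyMeasurable.mul (AEStronglyMeasurable.mul ?_ i1.aestronglyMeasurable)
          exact (Complex.continuous_ofReal.comp (Real.continuous_sqrt.comp cT)).aestronglyMeasurable
        · rw [norm_mul, norm_eph, one_mul, norm_mul, Complex.norm_real, Real.norm_eq_abs,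
            abs_of_nonneg (Real.sqrt_nonneg _)]
          exact mul_le_of_le_one_left (norm_nonneg _) (Real.sqrt_le_one.2 (Tsymb_le_one hμ ξ))
      · have i1 : Integrable (fun ξ : ℝ => 2 * Real.pi * Complex.I * ξ * 𝓕 (sqS (cS (η t))) ξ) := by
          have : (fun ξ : ℝ => 2 * Real.pi * Complex.I * ξ * 𝓕 (sqS (cS (η t))) ξ) =
              ⇑(𝓕 (SchwartzMap.derivCLM ℝ ℂ (sqS (cS (η t)))) : 𝓢(ℝ, ℂ)) := by
            ext ξ
            rw [← fourier_derivS, SchwartzMap.fourier_coe]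
            rfl
          rw [this]
          exact SchwartzMap.integrable _
        have ce : Continuous (fun ξ : ℝ => eph 0 x 0 ξ) :=
          cont_eph0.comp (by fun_prop : Continuous fun ξ : ℝ => (x, ξ))
        refine Integrable.const_mul ?_ _
        refine i1.norm.mono' (ce.aestronglyMeasurable.mul i1.aestronglyMeasurable)
          (Filter.Eventually.of_forall fun ξ => ?_)
        rw [norm_mul, norm_eph, one_mul]

end Whit

namespace Whit

lemma half_sq (X : ℝ≥0∞) : (X ^ ((1:ℝ)/2)) ^ 2 = X := by
  rw [← ENNReal.rpow_natCast, ← ENNReal.rpow_mul]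
  norm_num

lemma cs2 {α : Type*} [MeasurableSpace α] {μ : Measure α} {f g : α → ℝ≥0∞} (hf : AEMeasurable f μ)
    (hg : AEMeasurable g μ) :
    (∫⁻ a, f a * g a ∂μ) ^ 2 ≤ (∫⁻ a, f a ^ 2 ∂μ) * (∫⁻ a, g a ^ 2 ∂μ) := by
  calc _ ≤ ((∫⁻ a, f a ^ 2 ∂μ) ^ ((1:ℝ)/2) * (∫⁻ a, g a ^ 2 ∂μ) ^ ((1:ℝ)/2)) ^ 2 := by
        gcongr
        exact cs α hf hg
    _ = _ := by rw [mul_pow, half_sq, half_sq]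

lemma continuous_jap : Continuous jap := by
  unfold jap
  exact Continuous.rpow_const (by fun_prop) (fun x => Or.inr (by norm_num))

lemma jap_sq (ξ : ℝ) : jap ξ ^ 2 = 1 + ξ ^ 2 := by
  unfold jap
  rw [← Real.rpow_natCast, ← Real.rpow_mul (by positivity)]
  norm_num

lemma one_le_jap (ξ : ℝ) : 1 ≤ jap ξ := by
  unfold jap
  exact Real.one_le_rpow (by nlinarith [sq_nonneg ξ]) (by norm_num)

lemma jap_pos (ξ : ℝ) : 0 < jap ξ := lt_of_lt_of_le one_pos (one_le_jap ξ)

lemma abs_le_jap (ξ : ℝ) : |ξ| ≤ jap ξ := by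
  refine abs_le_of_sq_le_sq' ?_ (jap_pos ξ).le |> fun h => abs_le.2 h
  rw [jap_sq]
  linarith

lemma jap_sub (ξ ζ : ℝ) : jap ξ ≤ jap ζ + jap (ξ - ζ) := by
  have h1 := abs_le_jap ζ
  have h2 := abs_le_jap (ξ - ζ)
  have h3 := one_le_jap ζ
  have h4 := one_le_jap (ξ - ζ)
  refine le_of_sq_le_sq ?_ (by positivity) |> id
  have e1 := jap_sq ξ
  have e2 := jap_sq ζ
  have e3 := jap_sq (ξ - ζ)
  have : ζ * (ξ - ζ) ≤ jap ζ * jap (ξ - ζ) := by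
    calc _ ≤ |ζ * (ξ - ζ)| := le_abs_self _
      _ = |ζ| * |ξ - ζ| := abs_mul _ _
      _ ≤ _ := by gcongr
  nlinarith

def jr (r ξ : ℝ) : ℝ≥0∞ := ENNReal.ofReal (jap ξ ^ r)

lemma continuous_japr (r : ℝ) : Continuous (fun ξ => jap ξ ^ r) :=
  continuous_jap.rpow_const (fun ξ => Or.inl (jap_pos ξ).ne')

lemma measurable_jr (r : ℝ) : Measurable (jr r) :=
  ENNReal.measurable_ofReal.comp (continuous_japr r).measurable

def Eh (r : ℝ) (v : ℝ → ℂ) : ℝ≥0∞ := ∫⁻ ξ, (jr r ξ * ‖v ξ‖ₑ) ^ 2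

lemma HsNorm_sq (r : ℝ) (f : ℝ → ℂ) : HsNorm r f ^ 2 = Eh r (𝓕 f) := by
  unfold HsNorm Eh
  rw [eLpNorm_eq_lintegral_rpow_enorm_toReal (by norm_num) (by norm_num)]
  simp only [ENNReal.toReal_ofNat]
  rw [half_sq]
  congr 1
  ext ξ
  rw [enorm_mul, enorm_norm, Real.enorm_of_nonneg (Real.rpow_nonneg (jap_pos ξ).le _), jr]
  norm_cast

def Kr (r : ℝ) : ℝ≥0∞ := ∫⁻ ξ, ENNReal.ofReal (jap ξ ^ (1 - r)) ^ 2

lemma Kr_lt {r : ℝ} (hr : 3 / 2 < r) : Kr r < ⊤ := by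
  have hi : Integrable (fun ξ : ℝ => ((1:ℝ) + ‖ξ‖ ^ 2) ^ (-(2 * r - 2) / 2)) :=
    integrable_rpow_neg_one_add_norm_sq (by simp; linarith)
  have := hi.lintegral_lt_top
  refine lt_of_le_of_lt (le_of_eq ?_) this
  unfold Kr
  congr 1
  ext ξ
  rw [← ENNReal.ofReal_pow (Real.rpow_nonneg (jap_pos ξ).le _)]
  congr 1
  rw [Real.norm_eq_abs, sq_abs, ← jap_sq, ← Real.rpow_natCast, ← Real.rpow_natCast,
    ← Real.rpow_mul (jap_pos ξ).le, ← Real.rpow_mul (jap_pos ξ).le]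
  congr 1
  push_cast
  ring

lemma l1_est {r : ℝ} {v : ℝ → ℂ} (hv : Continuous v) :
    (∫⁻ ξ, ENNReal.ofReal (jap ξ) * ‖v ξ‖ₑ) ^ 2 ≤ Kr r * Eh r v := by
  have e : ∀ ξ, ENNReal.ofReal (jap ξ) * ‖v ξ‖ₑ = ENNReal.ofReal (jap ξ ^ (1 - r)) * (jr r ξ * ‖v ξ‖ₑ) := by
    intro ξ
    rw [← mul_assoc, jr, ← ENNReal.ofReal_mul (Real.rpow_nonneg (jap_pos ξ).le _),
      ← Real.rpow_add (jap_pos ξ)]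
    simp
  simp_rw [e]
  exact cs2 (ENNReal.measurable_ofReal.comp (continuous_japr _).measurable).aemeasurable
    ((measurable_jr r).mul hv.measurable.enorm).aemeasurable

lemma l1_est' {r : ℝ} {v : ℝ → ℂ} (hv : Continuous v) :
    (∫⁻ ξ, ‖v ξ‖ₑ) ^ 2 ≤ Kr r * Eh r v := by
  refine le_trans ?_ (l1_est hv)
  gcongr with ξ
  calc ‖v ξ‖ₑ = 1 * ‖v ξ‖ₑ := (one_mul _).symm
    _ ≤ _ := by
      gcongr
      rw [← ENNReal.ofReal_one]
      exact ENNReal.ofReal_le_ofReal (one_le_jap ξ)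

lemma jr_sub {r : ℝ} (hr : 0 ≤ r) (ξ ζ : ℝ) :
    jr r ξ ≤ ENNReal.ofReal (2 ^ r) * (jr r ζ + jr r (ξ - ζ)) := by
  unfold jr
  rw [← ENNReal.ofReal_add (Real.rpow_nonneg (jap_pos _).le _) (Real.rpow_nonneg (jap_pos _).le _),
    ← ENNReal.ofReal_mul (by positivity)]
  apply ENNReal.ofReal_le_ofReal
  have h := jap_sub ξ ζ
  have p1 := jap_pos ζ
  have p2 := jap_pos (ξ - ζ)
  have h1 : jap ξ ≤ 2 * max (jap ζ) (jap (ξ - ζ)) := by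
    have := le_max_left (jap ζ) (jap (ξ - ζ))
    have := le_max_right (jap ζ) (jap (ξ - ζ))
    linarith
  calc jap ξ ^ r ≤ (2 * max (jap ζ) (jap (ξ - ζ))) ^ r :=
        Real.rpow_le_rpow (jap_pos _).le h1 hr
    _ = 2 ^ r * (max (jap ζ) (jap (ξ - ζ))) ^ r := Real.mul_rpow (by norm_num) (by positivity)
    _ ≤ _ := by
      gcongr
      rcases max_cases (jap ζ) (jap (ξ - ζ)) with ⟨h, _⟩ | ⟨h, _⟩ <;> rw [h]
      · have := Real.rpow_nonneg p2.le r
        linarith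
      · have := Real.rpow_nonneg p1.le r
        linarith

lemma young {a g : ℝ → ℝ≥0∞} (ha : Measurable a) (hg : Measurable g) :
    ∫⁻ ξ, (∫⁻ ζ, a ζ * g (ξ - ζ)) ^ 2 ≤ (∫⁻ ζ, a ζ) ^ 2 * ∫⁻ ξ, g ξ ^ 2 := by
  have m : Measurable (fun p : ℝ × ℝ => a p.2 * g (p.1 - p.2) ^ 2) :=
    (ha.comp measurable_snd).mul ((hg.comp (measurable_fst.sub measurable_snd)).pow_const 2)
  have pt : ∀ ξ, (∫⁻ ζ, a ζ * g (ξ - ζ)) ^ 2 ≤ (∫⁻ ζ, a ζ) * ∫⁻ ζ, a ζ * g (ξ - ζ) ^ 2 := by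
    intro ξ
    have mm : Measurable (fun ζ => g (ξ - ζ)) := hg.comp (measurable_const.sub measurable_id)
    have := cs2 (μ := volume) (f := fun ζ => a ζ ^ ((1:ℝ)/2)) (g := fun ζ => a ζ ^ ((1:ℝ)/2) * g (ξ - ζ))
      (ha.pow_const _).aemeasurable ((ha.pow_const _).mul mm).aemeasurable
    simp_rw [mul_pow, half_sq, ← mul_assoc, ← sq, half_sq] at this
    exact this
  calc _ ≤ ∫⁻ ξ, (∫⁻ ζ, a ζ) * ∫⁻ ζ, a ζ * g (ξ - ζ) ^ 2 := lintegral_mono pt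
    _ = (∫⁻ ζ, a ζ) * ∫⁻ ξ, ∫⁻ ζ, a ζ * g (ξ - ζ) ^ 2 :=
        lintegral_const_mul _ m.lintegral_prod_right'
    _ = (∫⁻ ζ, a ζ) * ∫⁻ ζ, ∫⁻ ξ, a ζ * g (ξ - ζ) ^ 2 := by
        rw [lintegral_lintegral_swap]
        exact m.aemeasurable
    _ = (∫⁻ ζ, a ζ) * ∫⁻ ζ, a ζ * ∫⁻ ξ, g ξ ^ 2 := by
        congr 2
        ext ζ
        have mm : Measurable (fun ξ => g (ξ - ζ) ^ 2) := (hg.comp (measurable_id.sub_const ζ)).pow_const 2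
        rw [lintegral_const_mul _ mm,
          lintegral_sub_right_eq_self (fun ξ => g ξ ^ 2)]
    _ = _ := by
        rw [lintegral_mul_const _ ha, sq, mul_assoc]

lemma sob {r : ℝ} (hr : 0 ≤ r) {v H : ℝ → ℂ} (hv : Continuous v)
    (hH : ∀ ξ, H ξ = ∫ ζ, v ζ * v (ξ - ζ)) :
    Eh r H ≤ ENNReal.ofReal (2 * 2 ^ r) ^ 2 * (Kr r * Eh r v) * Eh r v := by
  have mn : Measurable (fun ζ => ‖v ζ‖ₑ) := hv.measurable.enorm
  have mg : Measurable (fun ζ => jr r ζ * ‖v ζ‖ₑ) := (measurable_jr r).mul mn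
  have pt : ∀ ξ, jr r ξ * ‖H ξ‖ₑ ≤
      ENNReal.ofReal (2 * 2 ^ r) * ∫⁻ ζ, ‖v ζ‖ₑ * (jr r (ξ - ζ) * ‖v (ξ - ζ)‖ₑ) := by
    intro ξ
    have mn2 : Measurable (fun ζ => ‖v (ξ - ζ)‖ₑ) := mn.comp (measurable_const.sub measurable_id)
    have mg2 : Measurable (fun ζ => jr r (ξ - ζ) * ‖v (ξ - ζ)‖ₑ) := mg.comp (measurable_const.sub measurable_id)
    have mj2 : Measurable (fun ζ => jr r (ξ - ζ)) := (measurable_jr r).comp (measurable_const.sub measurable_id)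
    calc jr r ξ * ‖H ξ‖ₑ ≤ jr r ξ * ∫⁻ ζ, ‖v ζ‖ₑ * ‖v (ξ - ζ)‖ₑ := by
          gcongr
          rw [hH]
          refine (enorm_integral_le_lintegral_enorm _).trans (le_of_eq ?_)
          simp_rw [enorm_mul]
      _ = ∫⁻ ζ, jr r ξ * (‖v ζ‖ₑ * ‖v (ξ - ζ)‖ₑ) := (lintegral_const_mul _ (mn.mul mn2)).symm
      _ ≤ ∫⁻ ζ, ENNReal.ofReal (2 ^ r) * ((jr r ζ * ‖v ζ‖ₑ) * ‖v (ξ - ζ)‖ₑ +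
            ‖v ζ‖ₑ * (jr r (ξ - ζ) * ‖v (ξ - ζ)‖ₑ)) := by
          refine lintegral_mono fun ζ => ?_
          calc _ ≤ ENNReal.ofReal (2 ^ r) * (jr r ζ + jr r (ξ - ζ)) * (‖v ζ‖ₑ * ‖v (ξ - ζ)‖ₑ) := by
                gcongr
                exact jr_sub hr ξ ζ
            _ = _ := by ring
      _ = ENNReal.ofReal (2 ^ r) * ((∫⁻ ζ, (jr r ζ * ‖v ζ‖ₑ) * ‖v (ξ - ζ)‖ₑ) +
            ∫⁻ ζ, ‖v ζ‖ₑ * (jr r (ξ - ζ) * ‖v (ξ - ζ)‖ₑ)) := by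
          have m1 : Measurable (fun ζ => (jr r ζ * ‖v ζ‖ₑ) * ‖v (ξ - ζ)‖ₑ) := mg.mul mn2
          have m2 : Measurable (fun ζ => ‖v ζ‖ₑ * (jr r (ξ - ζ) * ‖v (ξ - ζ)‖ₑ)) := mn.mul mg2
          have m3 : Measurable (fun ζ => (jr r ζ * ‖v ζ‖ₑ) * ‖v (ξ - ζ)‖ₑ +
            ‖v ζ‖ₑ * (jr r (ξ - ζ) * ‖v (ξ - ζ)‖ₑ)) := m1.add m2
          rw [lintegral_const_mul _ m3, lintegral_add_left m1]
      _ = _ := by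
          have : (∫⁻ ζ, (jr r ζ * ‖v ζ‖ₑ) * ‖v (ξ - ζ)‖ₑ) =
              ∫⁻ ζ, ‖v ζ‖ₑ * (jr r (ξ - ζ) * ‖v (ξ - ζ)‖ₑ) := by
            rw [← lintegral_sub_left_eq_self _ ξ]
            congr 1
            ext ζ
            rw [sub_sub_cancel, mul_comm]
          rw [this, ← two_mul, ← mul_assoc, ENNReal.ofReal_mul (by norm_num), mul_comm (ENNReal.ofReal 2)]
          simp
  have my : Measurable (fun ξ => ∫⁻ ζ, ‖v ζ‖ₑ * (jr r (ξ - ζ) * ‖v (ξ - ζ)‖ₑ)) := by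
    refine Measurable.lintegral_prod_right' (f := fun p : ℝ × ℝ => ‖v p.2‖ₑ * (jr r (p.1 - p.2) * ‖v (p.1 - p.2)‖ₑ)) ?_
    exact (mn.comp measurable_snd).mul (mg.comp (measurable_fst.sub measurable_snd))
  unfold Eh
  calc _ ≤ ∫⁻ ξ, (ENNReal.ofReal (2 * 2 ^ r) * ∫⁻ ζ, ‖v ζ‖ₑ * (jr r (ξ - ζ) * ‖v (ξ - ζ)‖ₑ)) ^ 2 := by
        exact lintegral_mono fun ξ => pow_le_pow_left₀ zero_le (pt ξ) 2
    _ = ENNReal.ofReal (2 * 2 ^ r) ^ 2 * ∫⁻ ξ, (∫⁻ ζ, ‖v ζ‖ₑ * (jr r (ξ - ζ) * ‖v (ξ - ζ)‖ₑ)) ^ 2 := by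
        simp_rw [mul_pow]
        rw [lintegral_const_mul _ (my.pow_const 2)]
    _ ≤ ENNReal.ofReal (2 * 2 ^ r) ^ 2 * ((∫⁻ ζ, ‖v ζ‖ₑ) ^ 2 * ∫⁻ ξ, (jr r ξ * ‖v ξ‖ₑ) ^ 2) := by
        gcongr
        exact young mn mg
    _ ≤ _ := by
        rw [← mul_assoc]
        gcongr
        exact l1_est' hv

end Whit

namespace Whit

def LL (N : ℝ) : ℝ := max N 1

def A0 (μ T : ℝ) : ℝ := μ ^ (-(1 : ℝ) / 5) * T ^ ((3 : ℝ) / 10)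
def G0 (μ T : ℝ) : ℝ := μ ^ (-(1 : ℝ) / 5) * T ^ ((4 : ℝ) / 5)

lemma num1 {μ T N : ℝ} (hμ : 0 < μ) (hT : 0 < T) (hN : 0 < N) (hM : 1 ≤ T * μ) :
    ∃ n : ℕ, 0 < n ∧
      (n : ℝ) * (2 * (640 * Real.sqrt (T / n) / Real.sqrt (μ * Lam N))) ≤
        2000 * Real.sqrt (LL N / Lam N) * A0 μ T ^ 2 ∧
      T / n * N ≤ G0 μ T := by
  have hL1 : 1 ≤ LL N := le_max_right _ _
  have hLN : N ≤ LL N := le_max_left _ _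
  have hΛ := Lam_pos hN
  set m : ℝ := (T * μ) ^ ((1:ℝ)/5) with hm
  have hm1 : 1 ≤ m := Real.one_le_rpow hM (by norm_num)
  have hmL : 1 ≤ m * LL N := one_le_mul_of_one_le_of_one_le hm1 hL1
  have hmL0 : 0 < m * LL N := by linarith
  set n := ⌈m * LL N⌉₊ with hn
  have hn0 : 0 < n := Nat.ceil_pos.2 hmL0
  have hnr : (0:ℝ) < n := by exact_mod_cast hn0
  have hn1 : m * LL N ≤ n := Nat.le_ceil _
  have hn2 : (n:ℝ) ≤ 2 * (m * LL N) := by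
    have := Nat.ceil_lt_add_one hmL0.le
    linarith
  refine ⟨n, hn0, ?_, ?_⟩
  · have e1 : (n : ℝ) * (2 * (640 * Real.sqrt (T / n) / Real.sqrt (μ * Lam N))) =
        1280 * Real.sqrt (n * T / (μ * Lam N)) := by
      rw [Real.sqrt_div hT.le, Real.sqrt_div (by positivity), Real.sqrt_mul hnr.le]
      have : Real.sqrt n ≠ 0 := (Real.sqrt_pos.2 hnr).ne'
      have h2 : (n:ℝ) = Real.sqrt n * Real.sqrt n := (Real.mul_self_sqrt hnr.le).symm
      field_simp
      nth_rewrite 1 [h2]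
      ring
    have e2 : A0 μ T ^ 2 = Real.sqrt (m * T / μ) := by
      symm
      rw [Real.sqrt_eq_iff_eq_sq (by positivity) (by positivity), hm, A0, ← pow_mul, mul_pow,
        ← Real.rpow_natCast, ← Real.rpow_natCast, ← Real.rpow_mul hμ.le, ← Real.rpow_mul hT.le,
        Real.mul_rpow hT.le hμ.le, div_eq_mul_inv, ← Real.rpow_neg_one μ]
      nth_rewrite 2 [← Real.rpow_one T]
      rw [show T ^ ((1:ℝ)/5) * μ ^ ((1:ℝ)/5) * T ^ (1:ℝ) * μ ^ (-1:ℝ) =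
        (μ ^ ((1:ℝ)/5) * μ ^ (-1:ℝ)) * (T ^ ((1:ℝ)/5) * T ^ (1:ℝ)) by ring,
        ← Real.rpow_add hμ, ← Real.rpow_add hT]
      norm_num
    rw [e1, e2, mul_assoc, ← Real.sqrt_mul (by positivity)]
    have e3 : Real.sqrt (n * T / (μ * Lam N)) ≤ Real.sqrt 2 * Real.sqrt (LL N / Lam N * (m * T / μ)) := by
      rw [← Real.sqrt_mul (by norm_num)]
      apply Real.sqrt_le_sqrt
      calc n * T / (μ * Lam N) ≤ (2 * (m * LL N)) * T / (μ * Lam N) := by gcongr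
        _ = _ := by field_simp
    have e4 : Real.sqrt 2 ≤ 3 / 2 := by
      rw [Real.sqrt_le_left (by norm_num)]; norm_num
    calc _ ≤ 1280 * (3 / 2 * Real.sqrt (LL N / Lam N * (m * T / μ))) := by
          gcongr
          exact e3.trans (by gcongr)
      _ ≤ _ := by
          have := Real.sqrt_nonneg (LL N / Lam N * (m * T / μ))
          nlinarith
  · have e : T = m * G0 μ T := by
      rw [hm, G0, Real.mul_rpow hT.le hμ.le,
        show T ^ ((1:ℝ)/5) * μ ^ ((1:ℝ)/5) * (μ ^ (-(1 : ℝ) / 5) * T ^ ((4 : ℝ) / 5)) =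
        (μ ^ ((1:ℝ)/5) * μ ^ (-(1:ℝ)/5)) * (T ^ ((1:ℝ)/5) * T ^ ((4:ℝ)/5)) by ring,
        ← Real.rpow_add hμ, ← Real.rpow_add hT]
      norm_num
    have hG : 0 < G0 μ T := by unfold G0; positivity
    rw [div_mul_eq_mul_div, div_le_iff₀ hnr]
    calc T * N = m * N * G0 μ T := by nth_rewrite 1 [e]; ring
      _ ≤ n * G0 μ T := by
        gcongr
        exact le_trans (by gcongr) hn1
      _ = _ := by ring

def qq (r : ℝ) : ℝ := 2 ^ (-(min (r - 13 / 8) (3 / 4)))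

lemma qq_pos (r : ℝ) : 0 < qq r := by unfold qq; positivity

lemma qq_lt {r : ℝ} (hr : 13 / 8 < r) : qq r < 1 := by
  unfold qq
  apply Real.rpow_lt_one_of_one_lt_of_neg (by norm_num)
  have : 0 < min (r - 13 / 8) (3 / 4) := lt_min (by linarith) (by norm_num)
  linarith

lemma sqrt_eq_pow {X a : ℝ} (hX : 0 < X) : Real.sqrt (X ^ a) = X ^ (a / 2) := by
  rw [Real.sqrt_eq_rpow, ← Real.rpow_mul hX.le]
  congr 1; ring

lemma num2 (r : ℝ) (k : ℤ) :
    Real.sqrt (LL ((2:ℝ) ^ k) / Lam ((2:ℝ) ^ k)) * ((2:ℝ) ^ k * LL ((2:ℝ) ^ k) ^ (-r)) ^ 2 ≤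
      (qq r ^ k.natAbs) ^ 2 := by
  set N : ℝ := (2:ℝ) ^ k with hN
  have hN0 : 0 < N := by positivity
  set δ := min (r - 13 / 8) (3 / 4) with hδ
  have hq : qq r = 2 ^ (-δ) := rfl
  rcases le_total 0 k with hk | hk
  · have hN1 : 1 ≤ N := one_le_zpow₀ (by norm_num) hk
    have hL : LL N = N := max_eq_left hN1
    have hsq : 1 ≤ Real.sqrt N := Real.one_le_sqrt.2 hN1
    have hΛ : Lam N = N ^ (-(3:ℝ)/2) := by
      have h1 : 1 / (N * Real.sqrt N) ≤ N := by
        rw [div_le_iff₀ (by positivity)]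
        have : 1 ≤ N * (N * Real.sqrt N) := one_le_mul_of_one_le_of_one_le hN1 (one_le_mul_of_one_le_of_one_le hN1 hsq)
        exact this
      unfold Lam
      rw [min_eq_right h1, Real.sqrt_eq_rpow]
      nth_rewrite 1 [← Real.rpow_one N]
      rw [← Real.rpow_add hN0, one_div, ← Real.rpow_neg hN0.le]
      norm_num
    have e1 : LL N / Lam N = N ^ ((5:ℝ)/2) := by
      rw [hL, hΛ]
      nth_rewrite 1 [← Real.rpow_one N]
      rw [← Real.rpow_sub hN0]
      norm_num
    have e2 : N * LL N ^ (-r) = N ^ (1 - r) := by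
      rw [hL]
      nth_rewrite 1 [← Real.rpow_one N]
      rw [← Real.rpow_add hN0]
      congr 1
    have e3 : qq r ^ k.natAbs = N ^ (-δ) := by
      rw [hq, hN, ← Real.rpow_natCast, ← Real.rpow_intCast, ← Real.rpow_mul (by norm_num),
        ← Real.rpow_mul (by norm_num), mul_comm]
      congr 2
      rw [Nat.cast_natAbs, abs_of_nonneg hk]
    rw [e1, e2, e3, sqrt_eq_pow hN0, ← Real.rpow_natCast, ← Real.rpow_natCast, ← Real.rpow_mul hN0.le,
      ← Real.rpow_mul hN0.le, ← Real.rpow_add hN0]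
    apply Real.rpow_le_rpow_of_exponent_le hN1
    have : δ ≤ r - 13 / 8 := min_le_left _ _
    push_cast
    linarith
  · have hN1 : N ≤ 1 := zpow_le_one_of_nonpos₀ (by norm_num) hk
    have hL : LL N = 1 := max_eq_right hN1
    have hsq : Real.sqrt N ≤ 1 := Real.sqrt_le_one.2 hN1
    have hΛ : Lam N = N := by
      apply min_eq_left
      rw [le_div_iff₀ (by positivity)]
      have : N * Real.sqrt N ≤ 1 := mul_le_one₀ hN1 (by positivity) hsq
      exact mul_le_one₀ hN1 (by positivity) this
    have e1 : LL N / Lam N = N ^ (-1:ℝ) := by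
      rw [hL, hΛ, Real.rpow_neg_one, one_div]
    have e2 : N * LL N ^ (-r) = N ^ (1:ℝ) := by
      rw [hL]
      simp
    have e3 : qq r ^ k.natAbs = N ^ δ := by
      rw [hq, hN, ← Real.rpow_natCast, ← Real.rpow_intCast, ← Real.rpow_mul (by norm_num),
        ← Real.rpow_mul (by norm_num)]
      congr 1
      have h : (k.natAbs : ℝ) = -(k : ℝ) := by
        rw [Nat.cast_natAbs, abs_of_nonpos hk]
        push_cast
        rfl
      rw [h]; ring
    rw [e1, e2, e3, sqrt_eq_pow hN0, ← Real.rpow_natCast, ← Real.rpow_natCast, ← Real.rpow_mul hN0.le,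
      ← Real.rpow_mul hN0.le, ← Real.rpow_add hN0]
    apply Real.rpow_le_rpow_of_exponent_ge hN0 hN1
    have : δ ≤ 3 / 4 := min_le_right _ _
    push_cast
    linarith

def wk (r : ℝ) (k : ℤ) : ℝ≥0∞ := ENNReal.ofReal (qq r ^ k.natAbs)

lemma wk_sum {r : ℝ} (hr : 13 / 8 < r) : ∑' k : ℤ, wk r k < ⊤ := by
  have hs : Summable (fun k : ℤ => qq r ^ k.natAbs) := by
    have := summable_geometric_of_lt_one (qq_pos r).le (qq_lt hr)
    refine Summable.of_nat_of_neg ?_ ?_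
    · simpa using this
    · simpa using this
  exact hs.tsum_ofReal_lt_top

lemma wk_ne (r : ℝ) (k : ℤ) : wk r k ≠ 0 := by
  unfold wk
  rw [ENNReal.ofReal_ne_zero_iff]
  exact pow_pos (qq_pos r) _

lemma wk_ne_top (r : ℝ) (k : ℤ) : wk r k ≠ ⊤ := ENNReal.ofReal_ne_top

lemma wcs (w a : ℤ → ℝ≥0∞) (h0 : ∀ k, w k ≠ 0) (ht : ∀ k, w k ≠ ⊤) :
    (∑' k, a k) ^ 2 ≤ (∑' k, w k) * ∑' k, (w k)⁻¹ * a k ^ 2 := by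
  have := cs2 (μ := Measure.count) (f := fun k : ℤ => w k ^ ((1:ℝ)/2))
    (g := fun k => (w k)⁻¹ ^ ((1:ℝ)/2) * a k) (measurable_of_countable _).aemeasurable
    (measurable_of_countable _).aemeasurable
  simp only [lintegral_count, mul_pow, half_sq] at this
  refine le_trans (le_of_eq ?_) this
  congr 2
  ext k
  rw [← mul_assoc, ← ENNReal.mul_rpow_of_nonneg _ _ (by norm_num), ENNReal.mul_inv_cancel (h0 k) (ht k)]
  simp

end Whit

namespace Whit

lemma an_est {r N : ℝ} (hr : 0 ≤ r) {f g : ℝ → ℂ} {b : ℝ} (hb : 0 ≤ b)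
    (h : ∀ ξ ∈ AN N, ‖f ξ‖ ≤ b * ‖g ξ‖) :
    ∫⁻ ξ in AN N, ‖f ξ‖ₑ ^ 2 ≤ ENNReal.ofReal (b * LL N ^ (-r)) ^ 2 * Eh r g := by
  have hL0 : 0 < LL N := lt_of_lt_of_le one_pos (le_max_right _ _)
  have pt : ∀ ξ ∈ AN N, ‖f ξ‖ₑ ^ 2 ≤ ENNReal.ofReal (b * LL N ^ (-r)) ^ 2 * (jr r ξ * ‖g ξ‖ₑ) ^ 2 := by
    intro ξ hξ
    rw [← mul_pow]
    gcongr
    have hL : LL N ≤ jap ξ := max_le (hξ.1.trans (abs_le_jap ξ)) (one_le_jap ξ)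
    have h1 : 1 ≤ LL N ^ (-r) * jap ξ ^ r := by
      rw [Real.rpow_neg hL0.le, inv_mul_eq_div, one_le_div (by positivity)]
      exact Real.rpow_le_rpow hL0.le hL hr
    rw [jr, ← ofReal_norm, ← ofReal_norm, ← ENNReal.ofReal_mul (Real.rpow_nonneg (jap_pos ξ).le _),
      ← ENNReal.ofReal_mul (by positivity)]
    apply ENNReal.ofReal_le_ofReal
    calc ‖f ξ‖ ≤ b * ‖g ξ‖ := h ξ hξ
      _ = b * ‖g ξ‖ * 1 := (mul_one _).symm
      _ ≤ b * ‖g ξ‖ * (LL N ^ (-r) * jap ξ ^ r) := by gcongr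
      _ = _ := by ring
  calc _ ≤ ∫⁻ ξ in AN N, ENNReal.ofReal (b * LL N ^ (-r)) ^ 2 * (jr r ξ * ‖g ξ‖ₑ) ^ 2 :=
        setLIntegral_mono' (measurableSet_AN N) pt
    _ ≤ ∫⁻ ξ, ENNReal.ofReal (b * LL N ^ (-r)) ^ 2 * (jr r ξ * ‖g ξ‖ₑ) ^ 2 := setLIntegral_le_lintegral _ _
    _ = _ := by
        rw [lintegral_const_mul' _ _ (by simp)]
        rfl

lemma an_disj : Pairwise (Function.onFun Disjoint fun k : ℤ => AN ((2:ℝ) ^ k)) := by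
  have key : ∀ j k : ℤ, j < k → ∀ ξ, ξ ∈ AN ((2:ℝ) ^ j) → ξ ∈ AN ((2:ℝ) ^ k) → False := by
    intro j k hjk ξ h1 h2
    have : (2:ℝ) ^ (j + 1) ≤ 2 ^ k := zpow_le_zpow_right₀ (by norm_num) (by omega)
    rw [zpow_add_one₀ (by norm_num)] at this
    have := h1.2
    have := h2.1
    linarith
  intro j k hjk
  rw [Function.onFun, Set.disjoint_left]
  intro ξ h1 h2
  rcases lt_or_gt_of_ne hjk with h | h
  · exact key j k h ξ h1 h2
  · exact key k j h ξ h2 h1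

lemma an_mem {ξ : ℝ} (h : ξ ≠ 0) : ∃ k : ℤ, ξ ∈ AN ((2:ℝ) ^ k) := by
  obtain ⟨k, hk⟩ := exists_mem_Ico_zpow (abs_pos.2 h) (one_lt_two (α := ℝ))
  refine ⟨k, hk.1, ?_⟩
  have := hk.2
  rw [zpow_add_one₀ (by norm_num)] at this
  linarith

lemma an_sum {g : ℝ → ℂ} (hg : Integrable g) :
    ‖∫ ξ, g ξ‖ₑ ≤ ∑' k : ℤ, ‖∫ ξ in AN ((2:ℝ) ^ k), g ξ‖ₑ := by
  have h := hasSum_integral_iUnion (μ := volume) (f := g) (fun k : ℤ => measurableSet_AN ((2:ℝ) ^ k)) an_disj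
    hg.integrableOn
  have e : volume.restrict (⋃ k : ℤ, AN ((2:ℝ) ^ k)) = (volume : Measure ℝ) := by
    apply Measure.restrict_eq_self_of_ae_mem
    have : ∀ᵐ ξ : ℝ, ξ ≠ 0 := by simp [ae_iff]
    filter_upwards [this] with ξ hξ
    exact Set.mem_iUnion.2 (an_mem hξ)
  rw [e] at h
  rw [← h.tsum_eq]
  exact enorm_tsum_le_tsum_enorm

lemma norm_tpi (ξ : ℝ) : ‖(2 * Real.pi * Complex.I * ξ : ℂ)‖ = 2 * Real.pi * |ξ| := by
  simp [abs_of_pos Real.pi_pos]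

lemma norm_eps {ε : ℝ} (hε : 0 < ε) : ‖(ε / 2 : ℂ)‖ = ε / 2 := by
  simp [abs_of_pos hε]

def cr (r : ℝ) : ℝ≥0∞ := ENNReal.ofReal (2 * 2 ^ r) ^ 2 * Kr r

def QQ (r ε μ T : ℝ) (E : ℝ≥0∞) : ℝ≥0∞ :=
  ENNReal.ofReal 2000 * ENNReal.ofReal (A0 μ T) ^ 2 *
    (ENNReal.ofReal (4 * Real.pi) ^ 2 * E + ENNReal.ofReal (8 * Real.pi ^ 2 * (ε * G0 μ T)) ^ 2 * (cr r * E ^ 2))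

lemma block_k {r ε μ T : ℝ} (hr : 0 ≤ r) (hε : 0 < ε) (hμ : 0 < μ) (hμ1 : μ ≤ 1) (hT : 0 < T) (hM : 1 ≤ T * μ)
    (x : ℝ → ℝ) (hx : Measurable x) (v H : ℝ → ℝ → ℂ) (hv : Continuous (Function.uncurry v))
    (hH : Continuous (Function.uncurry H)) (C : ℝ) (hC : 0 ≤ C)
    (bv : ∀ t ξ, (1 + ξ ^ 2) ^ 2 * ‖v t ξ‖ ≤ C) (bH : ∀ t ξ, (1 + ξ ^ 2) ^ 2 * ‖H t ξ‖ ≤ C)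
    (hD : ∀ a ∈ Set.Icc 0 T, ∀ t ∈ Set.Icc a T, ∀ ξ,
        v t ξ = eph μ 0 (t - a) ξ * v a ξ + ∫ σ in a..t, eph μ 0 (t - σ) ξ *
          (-(ε / 2 : ℂ) * (2 * Real.pi * Complex.I * ξ) * H σ ξ))
    (E : ℝ≥0∞) (hE : ∀ t ∈ Set.Icc 0 T, Eh r (v t) ≤ E)
    (hEH : ∀ t ∈ Set.Icc 0 T, Eh r (H t) ≤ cr r * E ^ 2) (k : ℤ) :
    ∫⁻ t in Set.Ioc 0 T, ‖∫ ξ in AN ((2:ℝ) ^ k), eph μ (x t) 0 ξ * (2 * Real.pi * Complex.I * ξ * v t ξ)‖ₑ ^ 2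
      ≤ wk r k ^ 2 * QQ r ε μ T E := by
  set N : ℝ := (2:ℝ) ^ k with hN
  have hN0 : 0 < N := by positivity
  have hL0 : 0 < LL N := lt_of_lt_of_le one_pos (le_max_right _ _)
  obtain ⟨n, hn, hn1, hn2⟩ := num1 hμ hT hN0 hM
  have hv' : Continuous (fun p : ℝ × ℝ => v p.1 p.2) := hv
  have hH' : Continuous (fun p : ℝ × ℝ => H p.1 p.2) := hH
  have hpi := Real.pi_pos
  have hA : 0 < A0 μ T := by unfold A0; positivity
  have hG : 0 < G0 μ T := by unfold G0; positivity
  have nF : ∀ σ ξ, ‖2 * Real.pi * Complex.I * ξ * (-(ε / 2 : ℂ) * (2 * Real.pi * Complex.I * ξ) * H σ ξ)‖ =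
      2 * Real.pi ^ 2 * ε * |ξ| ^ 2 * ‖H σ ξ‖ := by
    intro σ ξ
    rw [norm_mul, norm_tpi, norm_mul, norm_mul, norm_tpi, norm_neg, norm_eps hε]
    ring
  have hsq : ∀ ξ : ℝ, |ξ| ≤ (1 + ξ ^ 2) ^ 2 := by
    intro ξ
    nlinarith [abs_le_one_add_sq ξ, sq_nonneg ξ]
  have hsq2 : ∀ ξ : ℝ, |ξ| ^ 2 ≤ (1 + ξ ^ 2) ^ 2 := by
    intro ξ
    rw [sq_abs]
    nlinarith [sq_nonneg ξ]
  have key := block_est (n := n) hμ hμ1 hN0 hT x hx (fun t ξ => 2 * Real.pi * Complex.I * ξ * v t ξ)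
    (fun t ξ => 2 * Real.pi * Complex.I * ξ * (-(ε / 2 : ℂ) * (2 * Real.pi * Complex.I * ξ) * H t ξ))
    (by unfold Function.uncurry; fun_prop) (by unfold Function.uncurry; fun_prop)
    (2 * Real.pi * C + 2 * Real.pi ^ 2 * ε * C)
    (by
      intro t ξ
      rw [norm_mul, norm_tpi]
      have h1 : |ξ| * ‖v t ξ‖ ≤ C := le_trans (by gcongr; exact hsq ξ) (bv t ξ)
      have : 0 ≤ 2 * Real.pi ^ 2 * ε * C := by positivity
      calc _ = 2 * Real.pi * (|ξ| * ‖v t ξ‖) := by ring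
        _ ≤ 2 * Real.pi * C := by gcongr
        _ ≤ _ := by linarith)
    (by
      intro t ξ
      rw [nF]
      have h1 : |ξ| ^ 2 * ‖H t ξ‖ ≤ C := (mul_le_mul_of_nonneg_right (hsq2 ξ) (norm_nonneg _)).trans (bH t ξ)
      have : 0 ≤ 2 * Real.pi * C := by positivity
      calc _ = 2 * Real.pi ^ 2 * ε * (|ξ| ^ 2 * ‖H t ξ‖) := by ring
        _ ≤ 2 * Real.pi ^ 2 * ε * C := by gcongr
        _ ≤ _ := by linarith)
    (by
      intro a ha t ht ξ
      rw [hD a ha t ht ξ, mul_add, ← intervalIntegral.integral_const_mul]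
      congr 1
      · ring
      · congr 1
        ext σ
        ring)
    (ENNReal.ofReal ((4 * Real.pi * N) * LL N ^ (-r)) ^ 2 * E)
    (ENNReal.ofReal ((8 * Real.pi ^ 2 * ε * N ^ 2) * LL N ^ (-r)) ^ 2 * (cr r * E ^ 2))
    (by
      intro σ hσ
      refine (an_est hr (g := v σ) (b := 4 * Real.pi * N) (by positivity) ?_).trans (by gcongr; exact hE σ hσ)
      intro ξ hξ
      rw [norm_mul, norm_tpi]
      have := hξ.2.le
      refine mul_le_mul_of_nonneg_right ?_ (norm_nonneg _)
      nlinarith)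
    (by
      intro σ hσ
      refine (an_est hr (g := H σ) (b := 8 * Real.pi ^ 2 * ε * N ^ 2) (by positivity) ?_).trans
        (by gcongr; exact hEH σ hσ)
      intro ξ hξ
      rw [nF]
      have h1 : |ξ| ^ 2 ≤ (2 * N) ^ 2 := by
        gcongr
        exact hξ.2.le
      refine mul_le_mul_of_nonneg_right ?_ (norm_nonneg _)
      calc 2 * Real.pi ^ 2 * ε * |ξ| ^ 2 ≤ 2 * Real.pi ^ 2 * ε * (2 * N) ^ 2 := by gcongr
        _ = _ := by ring) hn
  refine key.trans ?_
  have hnr : (0:ℝ) < n := by exact_mod_cast hn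
  set κ := Real.sqrt (LL N / Lam N) with hκ
  set z := N * LL N ^ (-r) with hz
  have hz0 : 0 < z := by positivity
  have hw : κ * z ^ 2 ≤ (qq r ^ k.natAbs) ^ 2 := num2 r k
  have b1 : (n : ℝ≥0∞) * (2 * MM μ N (T / n)) ≤ ENNReal.ofReal (2000 * κ * A0 μ T ^ 2) := by
    unfold MM
    rw [show (n : ℝ≥0∞) = ENNReal.ofReal (n : ℝ) by simp, show (2 : ℝ≥0∞) = ENNReal.ofReal 2 by simp,
      ← ENNReal.ofReal_mul (by norm_num), ← ENNReal.ofReal_mul (by positivity)]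
    exact ENNReal.ofReal_le_ofReal hn1
  have b2 : ENNReal.ofReal (4 * Real.pi * N * LL N ^ (-r)) = ENNReal.ofReal z * ENNReal.ofReal (4 * Real.pi) := by
    rw [← ENNReal.ofReal_mul hz0.le, hz]
    congr 1
    ring
  have b3 : ENNReal.ofReal (T / n) * ENNReal.ofReal (8 * Real.pi ^ 2 * ε * N ^ 2 * LL N ^ (-r)) ≤
      ENNReal.ofReal z * ENNReal.ofReal (8 * Real.pi ^ 2 * (ε * G0 μ T)) := by
    rw [← ENNReal.ofReal_mul hz0.le, ← ENNReal.ofReal_mul (by positivity)]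
    apply ENNReal.ofReal_le_ofReal
    calc _ = z * (8 * Real.pi ^ 2 * (ε * (T / n * N))) := by rw [hz]; ring
      _ ≤ _ := by gcongr
  have b4 : ENNReal.ofReal (2000 * κ * A0 μ T ^ 2) * ENNReal.ofReal z ^ 2 ≤
      wk r k ^ 2 * (ENNReal.ofReal 2000 * ENNReal.ofReal (A0 μ T) ^ 2) := by
    have hq := pow_pos (qq_pos r) k.natAbs
    have hκ0 : 0 ≤ κ := Real.sqrt_nonneg _
    have hc0 : 0 ≤ 2000 * κ * A0 μ T ^ 2 := by positivity
    have hq2 : 0 ≤ (qq r ^ k.natAbs) ^ 2 := by positivity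
    unfold wk
    rw [← ENNReal.ofReal_pow hz0.le, ← ENNReal.ofReal_pow hq.le, ← ENNReal.ofReal_pow hA.le,
      ← ENNReal.ofReal_mul hc0, ← ENNReal.ofReal_mul (p := (2000:ℝ)) (by norm_num),
      ← ENNReal.ofReal_mul hq2]
    apply ENNReal.ofReal_le_ofReal
    calc _ = κ * z ^ 2 * (2000 * A0 μ T ^ 2) := by ring
      _ ≤ _ := by gcongr
  calc _ = ((n : ℝ≥0∞) * (2 * MM μ N (T / n))) * (ENNReal.ofReal (4 * Real.pi * N * LL N ^ (-r)) ^ 2 * E +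
        (ENNReal.ofReal (T / n) * ENNReal.ofReal (8 * Real.pi ^ 2 * ε * N ^ 2 * LL N ^ (-r))) ^ 2 * (cr r * E ^ 2)) := by
        ring
    _ ≤ ENNReal.ofReal (2000 * κ * A0 μ T ^ 2) * ((ENNReal.ofReal z * ENNReal.ofReal (4 * Real.pi)) ^ 2 * E +
        (ENNReal.ofReal z * ENNReal.ofReal (8 * Real.pi ^ 2 * (ε * G0 μ T))) ^ 2 * (cr r * E ^ 2)) := by
        rw [b2]
        gcongr
    _ = ENNReal.ofReal (2000 * κ * A0 μ T ^ 2) * ENNReal.ofReal z ^ 2 *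
        (ENNReal.ofReal (4 * Real.pi) ^ 2 * E +
          ENNReal.ofReal (8 * Real.pi ^ 2 * (ε * G0 μ T)) ^ 2 * (cr r * E ^ 2)) := by ring
    _ ≤ wk r k ^ 2 * (ENNReal.ofReal 2000 * ENNReal.ofReal (A0 μ T) ^ 2) *
        (ENNReal.ofReal (4 * Real.pi) ^ 2 * E +
          ENNReal.ofReal (8 * Real.pi ^ 2 * (ε * G0 μ T)) ^ 2 * (cr r * E ^ 2)) := by gcongr
    _ = _ := by unfold QQ; ring

end Whit

namespace Whit

lemma g_int {μ C : ℝ} (hμ : 0 < μ) (x : ℝ) {v : ℝ → ℂ} (hv : Continuous v)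
    (bv : ∀ ξ, (1 + ξ ^ 2) ^ 2 * ‖v ξ‖ ≤ C) :
    Integrable (fun ξ : ℝ => eph μ x 0 ξ * (2 * Real.pi * Complex.I * ξ * v ξ)) := by
  have c := continuous_eph hμ x 0
  refine Integrable.mono' (integrable_inv_one_add_sq.const_mul (2 * Real.pi * C))
    (Continuous.aestronglyMeasurable (by fun_prop)) (Filter.Eventually.of_forall fun ξ => ?_)
  rw [norm_mul, norm_eph, one_mul, norm_mul, norm_tpi, ← div_eq_mul_inv, le_div_iff₀ (by positivity)]
  have h1 : |ξ| * (1 + ξ ^ 2) * ‖v ξ‖ ≤ C := by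
    refine le_trans (mul_le_mul_of_nonneg_right ?_ (norm_nonneg _)) (bv ξ)
    rw [sq (1 + ξ ^ 2)]
    exact mul_le_mul_of_nonneg_right (abs_le_one_add_sq ξ) (by positivity)
  calc _ = 2 * Real.pi * (|ξ| * (1 + ξ ^ 2) * ‖v ξ‖) := by ring
    _ ≤ _ := by gcongr

lemma sum_est {r ε μ T : ℝ} (hr : 0 ≤ r) (hε : 0 < ε) (hμ : 0 < μ) (hμ1 : μ ≤ 1) (hT : 0 < T) (hM : 1 ≤ T * μ)
    (x : ℝ → ℝ) (hx : Measurable x) (v H : ℝ → ℝ → ℂ) (hv : Continuous (Function.uncurry v))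
    (hH : Continuous (Function.uncurry H)) (C : ℝ) (hC : 0 ≤ C)
    (bv : ∀ t ξ, (1 + ξ ^ 2) ^ 2 * ‖v t ξ‖ ≤ C) (bH : ∀ t ξ, (1 + ξ ^ 2) ^ 2 * ‖H t ξ‖ ≤ C)
    (hD : ∀ a ∈ Set.Icc 0 T, ∀ t ∈ Set.Icc a T, ∀ ξ,
        v t ξ = eph μ 0 (t - a) ξ * v a ξ + ∫ σ in a..t, eph μ 0 (t - σ) ξ *
          (-(ε / 2 : ℂ) * (2 * Real.pi * Complex.I * ξ) * H σ ξ))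
    (E : ℝ≥0∞) (hE : ∀ t ∈ Set.Icc 0 T, Eh r (v t) ≤ E)
    (hEH : ∀ t ∈ Set.Icc 0 T, Eh r (H t) ≤ cr r * E ^ 2) :
    ∫⁻ t in Set.Ioc 0 T, ‖∫ ξ, eph μ (x t) 0 ξ * (2 * Real.pi * Complex.I * ξ * v t ξ)‖ₑ ^ 2
      ≤ (∑' k : ℤ, wk r k) ^ 2 * QQ r ε μ T E := by
  have hv' : Continuous (fun p : ℝ × ℝ => v p.1 p.2) := hv
  have hvm : Measurable (fun p : ℝ × ℝ => v p.1 p.2) := hv'.measurable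
  have mm : ∀ k : ℤ, Measurable (fun t => (wk r k)⁻¹ *
      ‖∫ ξ in AN ((2:ℝ) ^ k), eph μ (x t) 0 ξ * (2 * Real.pi * Complex.I * ξ * v t ξ)‖ₑ ^ 2) := by
    intro k
    have m1 : StronglyMeasurable (fun p : ℝ × ℝ => eph μ (x p.1) 0 p.2 * (2 * Real.pi * Complex.I * p.2 * v p.1 p.2)) := by
      refine Measurable.stronglyMeasurable (Measurable.mul ?_ ?_)
      · exact measurable_eph hμ (hx.comp measurable_fst) measurable_const measurable_snd
      · exact (measurable_const.mul (Complex.measurable_ofReal.comp measurable_snd)).mul hvm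
    have m2 := (m1.integral_prod_right' (ν := volume.restrict (AN ((2:ℝ) ^ k)))).measurable
    exact (m2.enorm.pow_const 2).const_mul _
  calc _ ≤ ∫⁻ t in Set.Ioc 0 T, (∑' k : ℤ, wk r k) * ∑' k : ℤ, (wk r k)⁻¹ *
        ‖∫ ξ in AN ((2:ℝ) ^ k), eph μ (x t) 0 ξ * (2 * Real.pi * Complex.I * ξ * v t ξ)‖ₑ ^ 2 := by
        refine lintegral_mono fun t => ?_
        refine le_trans ?_ (wcs (wk r) _ (wk_ne r) (wk_ne_top r))
        have hvt : Continuous (v t) := hv'.comp (Continuous.prodMk_right t)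
        have := an_sum (g_int hμ (x t) hvt (bv t))
        gcongr
    _ = (∑' k : ℤ, wk r k) * ∑' k : ℤ, (wk r k)⁻¹ * ∫⁻ t in Set.Ioc 0 T,
        ‖∫ ξ in AN ((2:ℝ) ^ k), eph μ (x t) 0 ξ * (2 * Real.pi * Complex.I * ξ * v t ξ)‖ₑ ^ 2 := by
        rw [lintegral_const_mul _ (Measurable.tsum mm), lintegral_tsum fun k => (mm k).aemeasurable]
        congr 2
        ext k
        rw [lintegral_const_mul' _ _ (ENNReal.inv_ne_top.2 (wk_ne r k))]
    _ ≤ (∑' k : ℤ, wk r k) * ∑' k : ℤ, wk r k * QQ r ε μ T E := by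
        refine mul_le_mul_right (ENNReal.tsum_le_tsum fun k => ?_) _
        refine (mul_le_mul_right (block_k hr hε hμ hμ1 hT hM x hx v H hv hH C hC bv bH hD E hE hEH k) _).trans ?_
        rw [sq, mul_assoc, ← mul_assoc, ENNReal.inv_mul_cancel (wk_ne r k) (wk_ne_top r k), one_mul]
    _ = _ := by rw [ENNReal.tsum_mul_right]; ring

def sel (h : ℝ → ℝ → ℝ) : ℕ → ℝ → ℝ
  | 0, _ => TopologicalSpace.denseSeq ℝ 0
  | n + 1, t => if ‖h t (sel h n t)‖ < ‖h t (TopologicalSpace.denseSeq ℝ (n + 1))‖ then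
      TopologicalSpace.denseSeq ℝ (n + 1) else sel h n t

lemma sel_meas {h : ℝ → ℝ → ℝ} (hc : Measurable (Function.uncurry h)) (n : ℕ) : Measurable (sel h n) := by
  induction n with
  | zero => exact measurable_const
  | succ n ih =>
    have a : Measurable fun t => h t (sel h n t) := hc.comp (measurable_id.prodMk ih)
    have b : Measurable fun t => h t (TopologicalSpace.denseSeq ℝ (n + 1)) :=
      hc.comp (measurable_id.prodMk measurable_const)
    exact Measurable.ite (measurableSet_lt a.norm b.norm) measurable_const ih

lemma sel_step (h : ℝ → ℝ → ℝ) (n : ℕ) (t : ℝ) : ‖h t (sel h n t)‖ ≤ ‖h t (sel h (n + 1) t)‖ := by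
  rw [sel]
  split_ifs with hh
  · exact hh.le
  · exact le_rfl

lemma sel_ge (h : ℝ → ℝ → ℝ) (n : ℕ) (t : ℝ) :
    ‖h t (TopologicalSpace.denseSeq ℝ n)‖ ≤ ‖h t (sel h n t)‖ := by
  cases n with
  | zero => exact le_rfl
  | succ n =>
    rw [sel]
    split_ifs with hh
    · exact le_rfl
    · exact not_lt.1 hh

lemma sup_sel {h : ℝ → ℝ → ℝ} (hc : Continuous (Function.uncurry h)) (ν : Measure ℝ) (R : ℝ≥0∞)
    (hR : ∀ x : ℝ → ℝ, Measurable x → ∫⁻ t, ‖h t (x t)‖ₑ ^ 2 ∂ν ≤ R) :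
    ∫⁻ t, eLpNorm (h t) ⊤ volume ^ 2 ∂ν ≤ R := by
  have hm := hc.measurable
  have e : ∀ t, eLpNorm (h t) ⊤ volume ^ 2 ≤ ⨆ n, ‖h t (sel h n t)‖ₑ ^ 2 := by
    intro t
    have hct : Continuous (h t) := hc.comp (Continuous.prodMk_right t)
    rw [← ENNReal.iSup_pow]
    gcongr
    rw [eLpNorm_exponent_top]
    refine essSup_le_of_ae_le _ (Filter.Eventually.of_forall fun y => ?_)
    have hcl : IsClosed {y | ‖h t y‖ₑ ≤ ⨆ n, ‖h t (sel h n t)‖ₑ} := isClosed_le hct.enorm continuous_const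
    have hsub : Set.range (TopologicalSpace.denseSeq ℝ) ⊆ {y | ‖h t y‖ₑ ≤ ⨆ n, ‖h t (sel h n t)‖ₑ} := by
      rintro _ ⟨n, rfl⟩
      exact (enorm_le_iff_norm_le.2 (sel_ge h n t)).trans (le_iSup (fun n => ‖h t (sel h n t)‖ₑ) n)
    have := hcl.closure_subset_iff.2 hsub
    rw [(TopologicalSpace.denseRange_denseSeq ℝ).closure_range] at this
    exact this (Set.mem_univ y)
  refine (lintegral_mono e).trans ?_
  rw [lintegral_iSup]
  · exact iSup_le fun n => hR _ (sel_meas hm n)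
  · intro n
    exact (hm.comp (measurable_id.prodMk (sel_meas hm n))).enorm.pow_const 2
  · refine monotone_nat_of_le_succ fun n t => ?_
    have := enorm_le_iff_norm_le.2 (sel_step h n t)
    simp only
    gcongr

lemma deriv_cont {η : ℝ → 𝓢(ℝ, ℝ)} (hη : Continuous η) :
    Continuous (Function.uncurry fun t x => deriv (⇑(η t)) x) := by
  have c1 : Continuous fun t => SchwartzMap.derivCLM ℝ ℂ (cS (η t)) :=
    (SchwartzMap.derivCLM ℝ ℂ).continuous.comp (continuous_cS.comp hη)
  have c2 := Complex.continuous_re.comp (curve_cont c1)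
  refine c2.congr fun p => ?_
  simp only [Function.comp, Function.uncurry, SchwartzMap.derivCLM_apply, deriv_cS, cc, Complex.ofReal_re]

lemma triv {r μ : ℝ} (x : ℝ) {v : ℝ → ℂ} (hv : Continuous v) :
    ‖∫ ξ, eph μ x 0 ξ * (2 * Real.pi * Complex.I * ξ * v ξ)‖ₑ ^ 2 ≤
      ENNReal.ofReal (2 * Real.pi) ^ 2 * Kr r * Eh r v := by
  rw [mul_assoc (ENNReal.ofReal (2 * Real.pi) ^ 2)]
  refine le_trans ?_ (mul_le_mul_right (l1_est hv) _)
  rw [← mul_pow, ← lintegral_const_mul' _ _ ENNReal.ofReal_ne_top]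
  gcongr
  refine (enorm_integral_le_lintegral_enorm _).trans (lintegral_mono fun ξ => ?_)
  rw [← ofReal_norm, ← ofReal_norm, ← ENNReal.ofReal_mul (jap_pos ξ).le, ← ENNReal.ofReal_mul (by positivity)]
  apply ENNReal.ofReal_le_ofReal
  rw [norm_mul, norm_eph, one_mul, norm_mul, norm_tpi, mul_assoc]
  have := abs_le_jap ξ
  gcongr

end Whit

namespace Whit

lemma fin1 {θ μ T : ℝ} (hθ0 : 0 < θ) (hθ : θ < 1 / 2) (hμ : 0 < μ) (hT : 0 < T) (hM : T * μ ≤ 1) :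
    T ≤ (μ ^ (-(1 : ℝ) / 5 + 2 * θ / 5) * T ^ ((3 : ℝ) / 10 + 2 * θ / 5)) ^ 2 := by
  have h1 : 1 ≤ (T * μ) ^ (2 * (-(1 : ℝ) / 5 + 2 * θ / 5)) :=
    Real.one_le_rpow_of_pos_of_le_one_of_nonpos (by positivity) hM (by linarith)
  have e : (μ ^ (-(1 : ℝ) / 5 + 2 * θ / 5) * T ^ ((3 : ℝ) / 10 + 2 * θ / 5)) ^ 2 =
      T * (T * μ) ^ (2 * (-(1 : ℝ) / 5 + 2 * θ / 5)) := by
    rw [Real.mul_rpow hT.le hμ.le, mul_pow, ← Real.rpow_mul_natCast hμ.le, ← Real.rpow_mul_natCast hT.le, ← mul_assoc,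
      ← Real.rpow_one_add' hT.le (by linarith), mul_comm]
    congr 2 <;> push_cast <;> ring
  rw [e]
  nlinarith

lemma fin2 {θ μ T : ℝ} (hθ : 0 < θ) (hμ : 0 < μ) (hT : 0 < T) (hM : 1 ≤ T * μ) :
    A0 μ T ≤ μ ^ (-(1 : ℝ) / 5 + 2 * θ / 5) * T ^ ((3 : ℝ) / 10 + 2 * θ / 5) := by
  have h1 : 1 ≤ (T * μ) ^ (2 * θ / 5) := Real.one_le_rpow hM (by linarith)
  have hA : 0 < A0 μ T := by unfold A0; positivity
  calc A0 μ T ≤ A0 μ T * (T * μ) ^ (2 * θ / 5) := le_mul_of_one_le_right hA.le h1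
    _ = _ := by
      rw [Real.mul_rpow hT.le hμ.le, Real.rpow_add hμ, Real.rpow_add hT, A0]
      ring

lemma fin3 {θ ε μ T : ℝ} (hε : 0 < ε) (hθ : 0 < θ) (hμ : 0 < μ) (hT : 0 < T) (hM : 1 ≤ T * μ) :
    A0 μ T * (ε * G0 μ T) ≤ ε * μ ^ (-(2 : ℝ) / 5 + θ / 5) * T ^ ((11 : ℝ) / 10 + θ / 5) := by
  have h1 : 1 ≤ (T * μ) ^ (θ / 5) := Real.one_le_rpow hM (by linarith)
  have hA : 0 < A0 μ T := by unfold A0; positivity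
  have hG : 0 < G0 μ T := by unfold G0; positivity
  have e : A0 μ T * G0 μ T = μ ^ (-(2 : ℝ) / 5) * T ^ ((11 : ℝ) / 10) := by
    rw [A0, G0, mul_mul_mul_comm, ← Real.rpow_add hμ, ← Real.rpow_add hT]
    norm_num
  calc A0 μ T * (ε * G0 μ T) ≤ A0 μ T * (ε * G0 μ T) * (T * μ) ^ (θ / 5) :=
        le_mul_of_one_le_right (by positivity) h1
    _ = ε * (A0 μ T * G0 μ T) * (T * μ) ^ (θ / 5) := by ring
    _ = _ := by
      rw [e, Real.mul_rpow hT.le hμ.le, Real.rpow_add hμ, Real.rpow_add hT]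
      ring

def DD (r : ℝ) : ℝ≥0∞ :=
  ENNReal.ofReal (2 * Real.pi) ^ 2 * Kr r +
    (∑' k : ℤ, wk r k) ^ 2 * (ENNReal.ofReal 2000 *
      (ENNReal.ofReal (4 * Real.pi) ^ 2 + ENNReal.ofReal (8 * Real.pi ^ 2) ^ 2 * cr r))

lemma DD_ne {r : ℝ} (hr : 13 / 8 < r) : DD r ≠ ⊤ := by
  have h1 := (wk_sum hr).ne
  have h2 := (Kr_lt (r := r) (by linarith)).ne
  unfold DD cr
  finiteness

lemma main_est {r θ ε μ T : ℝ} (hr : 13 / 8 < r) (hθ : 0 < θ) (hθ1 : θ < 1 / 2) (hε : 0 < ε) (hμ : 0 < μ)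
    (hμ1 : μ ≤ 1) (hT : 0 < T) (η : ℝ → 𝓢(ℝ, ℝ)) (hη : Continuous η)
    (heq : ∀ t ∈ Set.Icc (0 : ℝ) T, ∀ x : ℝ,
                  HasDerivAt (fun τ => ((η τ x : ℝ) : ℂ))
                    (-(sqrtTmul μ (cc (deriv (⇑(η t)))) x +
                        (ε / 2 : ℂ) * ((deriv (fun y => (η t y) ^ 2) x : ℝ) : ℂ))) t)
    (S : ℝ≥0∞) (hS : ∀ t ∈ Set.Icc 0 T, HsNorm r (cc ⇑(η t)) ≤ S) (A B : ℝ≥0∞)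
    (hA : A = ENNReal.ofReal (μ ^ (-(1 : ℝ) / 5 + 2 * θ / 5) * T ^ ((3 : ℝ) / 10 + 2 * θ / 5)))
    (hB : B = ENNReal.ofReal (ε * μ ^ (-(2 : ℝ) / 5 + θ / 5) * T ^ ((11 : ℝ) / 10 + θ / 5))) :
    ∫⁻ t in Set.Ioc (0 : ℝ) T, eLpNorm (deriv (⇑(η t))) ⊤ volume ^ 2 ≤ DD r * (A * S + B * S ^ 2) ^ 2 := by
  obtain ⟨v, H, hv, hH, ⟨C, hC, bv, bH⟩, ev, eH, eD, hD⟩ := setup hμ hT η hη heq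
  have hv' : Continuous (fun p : ℝ × ℝ => v p.1 p.2) := hv
  have hvt : ∀ t, Continuous (v t) := fun t => hv'.comp (Continuous.prodMk_right t)
  have hE : ∀ t ∈ Set.Icc 0 T, Eh r (v t) ≤ S ^ 2 := by
    intro t ht
    rw [ev t ht, ← HsNorm_sq]
    have := hS t ht
    gcongr
  have hEH : ∀ t ∈ Set.Icc 0 T, Eh r (H t) ≤ cr r * (S ^ 2) ^ 2 := by
    intro t ht
    refine (sob (by linarith) (hvt t) (eH t ht)).trans ?_
    have := hE t ht
    calc _ ≤ ENNReal.ofReal (2 * 2 ^ r) ^ 2 * (Kr r * S ^ 2) * S ^ 2 := by gcongr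
      _ = _ := by unfold cr; ring
  have e1 : ∀ t ∈ Set.Icc 0 T, ∀ x, ‖deriv (⇑(η t)) x‖ₑ =
      ‖∫ ξ, eph μ x 0 ξ * (2 * Real.pi * Complex.I * ξ * v t ξ)‖ₑ := by
    intro t ht x
    rw [← eD t ht x, ← ofReal_norm, ← ofReal_norm, Complex.norm_real]
  refine sup_sel (h := fun t x => deriv (⇑(η t)) x) (deriv_cont hη) _ _ fun x hx => ?_
  have e2 : ∫⁻ t in Set.Ioc 0 T, ‖deriv (⇑(η t)) (x t)‖ₑ ^ 2 =
      ∫⁻ t in Set.Ioc 0 T, ‖∫ ξ, eph μ (x t) 0 ξ * (2 * Real.pi * Complex.I * ξ * v t ξ)‖ₑ ^ 2 :=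
    setLIntegral_congr_fun measurableSet_Ioc fun t ht => by
      simp only [e1 t (Set.Ioc_subset_Icc_self ht) (x t)]
  simp only [e2]
  have sq1 : (A * S) ^ 2 ≤ (A * S + B * S ^ 2) ^ 2 := by gcongr; exact le_self_add
  have sq2 : (B * S ^ 2) ^ 2 ≤ (A * S + B * S ^ 2) ^ 2 := by gcongr; exact le_add_self
  rcases le_total (T * μ) 1 with hM | hM
  · calc _ ≤ ∫⁻ t in Set.Ioc 0 T, ENNReal.ofReal (2 * Real.pi) ^ 2 * Kr r * S ^ 2 := by
          refine setLIntegral_mono' measurableSet_Ioc fun t ht => ?_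
          refine (triv (r := r) (x t) (hvt t)).trans ?_
          have := hE t (Set.Ioc_subset_Icc_self ht)
          gcongr
      _ = ENNReal.ofReal (2 * Real.pi) ^ 2 * Kr r * (ENNReal.ofReal T * S ^ 2) := by
          rw [setLIntegral_const, Real.volume_Ioc, sub_zero]
          ring
      _ ≤ ENNReal.ofReal (2 * Real.pi) ^ 2 * Kr r * (A * S) ^ 2 := by
          have : ENNReal.ofReal T ≤ A ^ 2 := by
            rw [hA, ← ENNReal.ofReal_pow (by positivity)]
            exact ENNReal.ofReal_le_ofReal (fin1 hθ hθ1 hμ hT hM)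
          rw [mul_pow]
          gcongr
      _ ≤ DD r * (A * S + B * S ^ 2) ^ 2 := mul_le_mul' le_self_add sq1
  · refine (sum_est (by linarith) hε hμ hμ1 hT hM x hx v H hv hH C hC bv bH hD (S ^ 2) hE hEH).trans ?_
    have hA0 : 0 < A0 μ T := by unfold A0; positivity
    have h2 : ENNReal.ofReal (A0 μ T) ≤ A := by
      rw [hA]; exact ENNReal.ofReal_le_ofReal (fin2 hθ hμ hT hM)
    have h3 : ENNReal.ofReal (A0 μ T) * ENNReal.ofReal (ε * G0 μ T) ≤ B := by
      rw [hB, ← ENNReal.ofReal_mul hA0.le]; exact ENNReal.ofReal_le_ofReal (fin3 hε hθ hμ hT hM)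
    calc _ = (∑' k : ℤ, wk r k) ^ 2 * (ENNReal.ofReal 2000 *
            (ENNReal.ofReal (4 * Real.pi) ^ 2 * (ENNReal.ofReal (A0 μ T) * S) ^ 2 +
              ENNReal.ofReal (8 * Real.pi ^ 2) ^ 2 * cr r *
                (ENNReal.ofReal (A0 μ T) * ENNReal.ofReal (ε * G0 μ T) * S ^ 2) ^ 2)) := by
          unfold QQ
          rw [ENNReal.ofReal_mul (p := 8 * Real.pi ^ 2) (by positivity)]
          ring
      _ ≤ (∑' k : ℤ, wk r k) ^ 2 * (ENNReal.ofReal 2000 *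
            (ENNReal.ofReal (4 * Real.pi) ^ 2 * (A * S) ^ 2 +
              ENNReal.ofReal (8 * Real.pi ^ 2) ^ 2 * cr r * (B * S ^ 2) ^ 2)) := by gcongr
      _ ≤ (∑' k : ℤ, wk r k) ^ 2 * (ENNReal.ofReal 2000 *
            (ENNReal.ofReal (4 * Real.pi) ^ 2 * (A * S + B * S ^ 2) ^ 2 +
              ENNReal.ofReal (8 * Real.pi ^ 2) ^ 2 * cr r * (A * S + B * S ^ 2) ^ 2)) :=
          mul_le_mul_right (mul_le_mul_right (add_le_add (mul_le_mul_right sq1 _) (mul_le_mul_right sq2 _)) _) _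
      _ = ((∑' k : ℤ, wk r k) ^ 2 * (ENNReal.ofReal 2000 *
      (ENNReal.ofReal (4 * Real.pi) ^ 2 + ENNReal.ofReal (8 * Real.pi ^ 2) ^ 2 * cr r))) * (A * S + B * S ^ 2) ^ 2 := by
          ring
      _ ≤ DD r * (A * S + B * S ^ 2) ^ 2 := mul_le_mul' le_add_self le_rfl

end Whit

/-- Refined Strichartz estimate for solutions of the Whitham equation
(Proposition 4.3): for `r > 13/8` and all small `θ > 0` there is `C = C(r,θ)` such that any
Schwartz-valued `C¹`-in-time solution of `∂_t η + √T_μ(D) ∂_x η + (ε/2) ∂_x(η²) = 0` on `[0,T]`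
satisfies `‖∂_x η‖_{L²_T L^∞_x} ≤ C [ μ^{−1/5+2θ/5} T^{3/10+2θ/5} sup_t ‖η‖_{H^r}
+ ε μ^{−2/5+θ/5} T^{11/10+θ/5} (sup_t ‖η‖_{H^r})² ]`. -/
theorem whitham_refined_strichartz (r : ℝ) (hr : 13 / 8 < r) :
    ∃ θ₀ : ℝ, 0 < θ₀ ∧
      ∀ θ : ℝ, 0 < θ → θ < θ₀ →
        ∃ C : ℝ, 0 < C ∧
          ∀ ε μ : ℝ, 0 < ε → ε ≤ 1 → 0 < μ → μ ≤ 1 →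
            ∀ T : ℝ, 0 < T →
              ∀ η : ℝ → 𝓢(ℝ, ℝ), Continuous η →
                -- the Whitham equation `∂_t η = −(√T_μ(D) ∂_x η + (ε/2) ∂_x(η²))` on `[0,T]`
                (∀ t ∈ Set.Icc (0 : ℝ) T, ∀ x : ℝ,
                  HasDerivAt (fun τ => ((η τ x : ℝ) : ℂ))
                    (-(sqrtTmul μ (cc (deriv (⇑(η t)))) x +
                        (ε / 2 : ℂ) * ((deriv (fun y => (η t y) ^ 2) x : ℝ) : ℂ))) t) →
                (∫⁻ t in Set.Ioc (0 : ℝ) T,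
                    eLpNorm (deriv (⇑(η t))) ⊤ volume ^ 2) ^ ((1 : ℝ) / 2)
                  ≤ ENNReal.ofReal C *
                    (ENNReal.ofReal
                        (μ ^ (-(1 : ℝ) / 5 + 2 * θ / 5) * T ^ ((3 : ℝ) / 10 + 2 * θ / 5)) *
                      (⨆ t ∈ Set.Icc (0 : ℝ) T, HsNorm r (cc ⇑(η t))) +
                    ENNReal.ofReal
                        (ε * μ ^ (-(2 : ℝ) / 5 + θ / 5) * T ^ ((11 : ℝ) / 10 + θ / 5)) *
                      (⨆ t ∈ Set.Icc (0 : ℝ) T, HsNorm r (cc ⇑(η t))) ^ 2) := by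
  refine ⟨1 / 2, by norm_num, fun θ hθ hθ1 => ⟨(Whit.DD r ^ ((1:ℝ) / 2)).toReal + 1, by positivity, ?_⟩⟩
  intro ε μ hε _ hμ hμ1 T hT η hη heq
  have hD : Whit.DD r ^ ((1:ℝ) / 2) ≠ ⊤ := ENNReal.rpow_ne_top_of_nonneg (by norm_num) (Whit.DD_ne hr)
  have key := Whit.main_est hr hθ hθ1 hε hμ hμ1 hT η hη heq (⨆ t ∈ Set.Icc (0 : ℝ) T, HsNorm r (cc ⇑(η t)))
    (fun t ht => le_iSup₂ (f := fun t (_ : t ∈ Set.Icc (0 : ℝ) T) => HsNorm r (cc ⇑(η t))) t ht) _ _ rfl rfl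
  refine (ENNReal.rpow_le_rpow key (by norm_num)).trans ?_
  rw [ENNReal.mul_rpow_of_nonneg _ _ (by norm_num : (0:ℝ) ≤ 1 / 2), ← ENNReal.rpow_natCast, ← ENNReal.rpow_mul]
  norm_num only [Nat.cast_ofNat, ENNReal.rpow_one]
  refine mul_le_mul_left ?_ _
  conv_lhs => rw [← ENNReal.ofReal_toReal hD]
  exact ENNReal.ofReal_le_ofReal (by linarith)
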